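/- Maximizer of the Holevo capacity: for every n-qudit state σ, the channel E_σ : ρ ↦ ρ ⊠ σ satisfies χ(E_σ) = n log d if and only if σ is a pure stabilizer state. -/

import Mathlib

open scoped BigOperators ComplexOrder Classical ENNReal
open Matrix

namespace PaperQI

/-- The computational-basis index set `ℤ_d^n` for an `n`-qudit system. -/
abbrev QV (d n : ℕ) := Fin n → ZMod d

/-- Matrices (linear operators) on the `n`-qudit Hilbert space `(ℂ^d)^{⊗ n}`,
written in the computational basis indexed by `ℤ_d^n`. -/
abbrev Mat (d n : ℕ) := Matrix (QV d n) (QV d n) ℂ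

/-- The character `ξ^z = exp(2πi z/d)` for `z ∈ ℤ_d`. -/
noncomputable def ch (d : ℕ) (z : ZMod d) : ℂ :=
  Complex.exp (2 * Real.pi * Complex.I * (z.val : ℂ) / (d : ℂ))

/-- Dot product on `ℤ_d^n`. -/
def qdot {d n : ℕ} (p k : QV d n) : ZMod d := ∑ i, p i * k i

/-- The `n`-qudit Weyl operator `w(p,q) = ⊗_i ξ^{-2⁻¹ p_i q_i} Z^{p_i} X^{q_i}`
(for odd prime `d`).  Its matrix entries are
`w(p,q)[k+q, k] = ξ^{p·k + 2⁻¹ p·q}`. -/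
noncomputable def weyl (d n : ℕ) [Fact (Nat.Prime d)] (p q : QV d n) : Mat d n :=
  Matrix.of fun k' k =>
    if k' = k + q then ch d (qdot p k + (2 : ZMod d)⁻¹ * qdot p q) else 0

/-- `ρ` is an `n`-qudit state: positive semidefinite with trace one. -/
def IsState (d n : ℕ) [Fact (Nat.Prime d)] (ρ : Mat d n) : Prop :=
  ρ.PosSemidef ∧ ρ.trace = 1

/-- The characteristic function `Ξ_ρ(p,q) = Tr[ρ w(-p,-q)]`. -/
noncomputable def xi (d n : ℕ) [Fact (Nat.Prime d)] (ρ : Mat d n)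
    (pq : QV d n × QV d n) : ℂ :=
  (ρ * weyl d n (-pq.1) (-pq.2)).trace

/-- The mean state `M(ρ) = d^{-n} ∑_{|Ξ_ρ(p,q)| = 1} Ξ_ρ(p,q) w(p,q)`. -/
noncomputable def meanState (d n : ℕ) [Fact (Nat.Prime d)] (ρ : Mat d n) : Mat d n :=
  ((d : ℂ) ^ n)⁻¹ •
    ∑ pq : QV d n × QV d n,
      if ‖xi d n ρ pq‖ = 1 then xi d n ρ pq • weyl d n pq.1 pq.2 else 0

/-- `ρ` is a minimal stabilizer-projection state (MSPS): for some `r ≤ n` there are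
mutually commuting Weyl operators `w(p_i,q_i)`, `i = 1,…,r`, whose labels generate a
subgroup of `V^n` of order `d^r`, and phases `x ∈ ℤ_d^r`, such that
`ρ = d^{-(n-r)} ∏_i ( (1/d) ∑_{k ∈ ℤ_d} (ξ^{x_i} w(p_i,q_i))^k )`. -/
noncomputable def IsMSPS (d n : ℕ) [Fact (Nat.Prime d)] (ρ : Mat d n) : Prop :=
  ∃ r : ℕ, r ≤ n ∧
    ∃ (p q : Fin r → QV d n) (x : Fin r → ZMod d),
      (∀ i j, Commute (weyl d n (p i) (q i)) (weyl d n (p j) (q j))) ∧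
      Nat.card (AddSubgroup.closure (Set.range fun i => (p i, q i)) :
        AddSubgroup (QV d n × QV d n)) = d ^ r ∧
      ρ = ((d : ℂ) ^ (n - r))⁻¹ •
        (List.ofFn fun i =>
          (d : ℂ)⁻¹ • ∑ k : ZMod d, (ch d (x i) • weyl d n (p i) (q i)) ^ k.val).prod

/-- The magic gap `MG(ρ) = 1 - max{|Ξ_ρ(p,q)| : Ξ_ρ(p,q) ≠ 0, |Ξ_ρ(p,q)| ≠ 1}`,
and `MG(ρ) = 0` if this set is empty. -/
noncomputable def magicGap (d n : ℕ) [Fact (Nat.Prime d)] (ρ : Mat d n) : ℝ :=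
  let s : Finset ℝ :=
    (Finset.univ.filter fun pq : QV d n × QV d n =>
      xi d n ρ pq ≠ 0 ∧ ‖xi d n ρ pq‖ ≠ 1).image
      fun pq => ‖xi d n ρ pq‖
  if h : s.Nonempty then 1 - s.max' h else 0

/-- Von Neumann entropy `H(ρ) = -∑ λ_i log λ_i` (natural log, eigenvalues of `ρ`),
with the convention `0 log 0 = 0`; junk value `0` on non-Hermitian matrices. -/
noncomputable def vnEnt {d n : ℕ} [Fact (Nat.Prime d)] (ρ : Mat d n) : ℝ :=
  if h : ρ.IsHermitian then -∑ i, h.eigenvalues i * Real.log (h.eigenvalues i) else 0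

/-- Rényi entropy `H_α` for `α ∈ [0,∞]`:  `H_0 = log rank`, `H_1 = H` (von Neumann),
`H_∞ = -log λ_max`, and `H_α = (1-α)⁻¹ log ∑ λ_i^α` otherwise. -/
noncomputable def renyiEnt {d n : ℕ} [Fact (Nat.Prime d)] (α : ℝ≥0∞) (ρ : Mat d n) : ℝ :=
  if h : ρ.IsHermitian then
    if α = 0 then Real.log (ρ.rank : ℝ)
    else if α = 1 then -∑ i, h.eigenvalues i * Real.log (h.eigenvalues i)
    else if α = ⊤ then -Real.log (⨆ i, h.eigenvalues i)
    else (1 - α.toReal)⁻¹ * Real.log (∑ i, h.eigenvalues i ^ α.toReal)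
  else 0

/-- Matrix logarithm on the support: `log ρ = U diag(log λ_i) U†` via the spectral
decomposition, with `log 0 = 0` on the kernel; junk value `0` off Hermitian matrices. -/
noncomputable def matLog {d n : ℕ} [Fact (Nat.Prime d)] (ρ : Mat d n) : Mat d n :=
  if h : ρ.IsHermitian then
    (h.eigenvectorUnitary : Mat d n) *
      Matrix.diagonal (fun i => (Real.log (h.eigenvalues i) : ℂ)) *
      star (h.eigenvectorUnitary : Mat d n)
  else 0

/-- Matrix real power on the support: `ρ^t = U diag(λ_i^t) U†`, with `0^t = 0` on the
kernel (for `t ≠ 0`); junk value `0` off Hermitian matrices. -/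
noncomputable def matRpow {d n : ℕ} [Fact (Nat.Prime d)] (ρ : Mat d n) (t : ℝ) : Mat d n :=
  if h : ρ.IsHermitian then
    (h.eigenvectorUnitary : Mat d n) *
      Matrix.diagonal (fun i => ((h.eigenvalues i ^ t : ℝ) : ℂ)) *
      star (h.eigenvectorUnitary : Mat d n)
  else 0

/-- Support inclusion `supp ρ ⊆ supp σ`, expressed as `ker σ ⊆ ker ρ`
(the correct notion for positive semidefinite matrices). -/
def suppLE {d n : ℕ} [Fact (Nat.Prime d)] (ρ σ : Mat d n) : Prop :=
  ∀ v : QV d n → ℂ, σ.mulVec v = 0 → ρ.mulVec v = 0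

/-- Relative entropy `D(ρ‖σ) = Tr[ρ(log ρ - log σ)]` when `supp ρ ⊆ supp σ`, else `+∞`. -/
noncomputable def relEnt {d n : ℕ} [Fact (Nat.Prime d)] (ρ σ : Mat d n) : EReal :=
  if suppLE ρ σ then (((ρ * (matLog ρ - matLog σ)).trace.re : ℝ) : EReal) else ⊤

/-- Sandwiched Rényi relative entropy
`D_α(ρ‖σ) = (α-1)⁻¹ log Tr[(σ^{(1-α)/(2α)} ρ σ^{(1-α)/(2α)})^α]` for `α ≠ 1`
(with `+∞` when `supp ρ ⊄ supp σ`), and `D_1 = D` the relative entropy. -/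
noncomputable def sandRenyi {d n : ℕ} [Fact (Nat.Prime d)] (α : ℝ) (ρ σ : Mat d n) :
    EReal :=
  if α = 1 then relEnt ρ σ
  else if suppLE ρ σ then
    let x : ℝ := (α - 1)⁻¹ * Real.log
      ((matRpow (matRpow σ ((1 - α) / (2 * α)) * ρ * matRpow σ ((1 - α) / (2 * α)))
        α).trace.re)
    (x : EReal)
  else ⊤

/-- The key unitary `U|i,j⟩ = |N g₁₁ i - N g₁₀ j, -N g₀₁ i + N g₀₀ j⟩`,
where `N = (det G)⁻¹` in `ℤ_d`. -/
noncomputable def convU (d n : ℕ) [Fact (Nat.Prime d)] (g00 g01 g10 g11 : ZMod d) :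
    Matrix (QV d n × QV d n) (QV d n × QV d n) ℂ :=
  Matrix.of fun kl ij =>
    if kl = ((fun a => (g00 * g11 - g01 * g10)⁻¹ * g11 * ij.1 a
                      - (g00 * g11 - g01 * g10)⁻¹ * g10 * ij.2 a : QV d n),
             (fun a => -((g00 * g11 - g01 * g10)⁻¹ * g01) * ij.1 a
                      + (g00 * g11 - g01 * g10)⁻¹ * g00 * ij.2 a : QV d n))
    then 1 else 0

/-- Tensor (Kronecker) product of two `n`-qudit operators, on the doubled system. -/
def kron {d n : ℕ} (ρ σ : Mat d n) : Matrix (QV d n × QV d n) (QV d n × QV d n) ℂ :=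
  Matrix.of fun ij kl => ρ ij.1 kl.1 * σ ij.2 kl.2

/-- Partial trace over the second `n`-qudit factor. -/
noncomputable def ptrB {d n : ℕ} [Fact (Nat.Prime d)]
    (M : Matrix (QV d n × QV d n) (QV d n × QV d n) ℂ) : Mat d n :=
  Matrix.of fun i i' => ∑ j : QV d n, M (i, j) (i', j)

/-- The convolution `ρ ⊠ σ = Tr_B[U (ρ ⊗ σ) U†]` with parameter matrix
`G = [g₀₀, g₀₁; g₁₀, g₁₁]`. -/
noncomputable def conv (d n : ℕ) [Fact (Nat.Prime d)] (g00 g01 g10 g11 : ZMod d)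
    (ρ σ : Mat d n) : Mat d n :=
  ptrB (convU d n g00 g01 g10 g11 * kron ρ σ * (convU d n g00 g01 g10 g11)ᴴ)

/-- The beam-splitter unitary `U_{s,t}|i,j⟩ = |s i + t j, t i - s j⟩`. -/
noncomputable def bsU (d n : ℕ) [Fact (Nat.Prime d)] (s t : ZMod d) :
    Matrix (QV d n × QV d n) (QV d n × QV d n) ℂ :=
  Matrix.of fun kl ij =>
    if kl = ((fun a => s * ij.1 a + t * ij.2 a : QV d n),
             (fun a => t * ij.1 a - s * ij.2 a : QV d n))
    then 1 else 0

/-- The beam-splitter convolution `ρ ⊠_{s,t} σ = Tr_B[U_{s,t} (ρ ⊗ σ) U_{s,t}†]`. -/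
noncomputable def bsConv (d n : ℕ) [Fact (Nat.Prime d)] (s t : ZMod d)
    (ρ σ : Mat d n) : Mat d n :=
  ptrB (bsU d n s t * kron ρ σ * (bsU d n s t)ᴴ)

/-- Iterated self-convolution: `⊠^0 ρ = ρ` and `⊠^{N+1} ρ = (⊠^N ρ) ⊠ ρ`. -/
noncomputable def bsIter (d n : ℕ) [Fact (Nat.Prime d)] (s t : ZMod d) :
    ℕ → Mat d n → Mat d n
  | 0, ρ => ρ
  | N + 1, ρ => bsConv d n s t (bsIter d n s t N ρ) ρ

/-- `ρ` is the pure stabilizer state `|ψ⟩⟨ψ|` with stabilizer label group `S ⊆ V^n`: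
`S` has order `d^n` and `ψ` is a common eigenvector of all `w(p,q)`, `(p,q) ∈ S`. -/
noncomputable def IsPureStabilizerWithGroup (d n : ℕ) [Fact (Nat.Prime d)]
    (ρ : Mat d n) (S : AddSubgroup (QV d n × QV d n)) : Prop :=
  Nat.card S = d ^ n ∧
    ∃ ψ : QV d n → ℂ, ψ ≠ 0 ∧
      ρ = Matrix.of (fun a b => ψ a * starRingEnd ℂ (ψ b)) ∧
      ∀ pq ∈ S, ∃ c : ℂ, (weyl d n pq.1 pq.2).mulVec ψ = c • ψ

/-- `ρ` is a pure stabilizer state. -/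
noncomputable def IsPureStabilizer (d n : ℕ) [Fact (Nat.Prime d)] (ρ : Mat d n) : Prop :=
  ∃ S : AddSubgroup (QV d n × QV d n), IsPureStabilizerWithGroup d n ρ S

/-- `ρ` is a stabilizer state: a convex combination of pure stabilizer states. -/
noncomputable def IsStabilizerState (d n : ℕ) [Fact (Nat.Prime d)] (ρ : Mat d n) : Prop :=
  ∃ (m : ℕ) (p : Fin m → ℝ) (τ : Fin m → Mat d n),
    (∀ i, 0 ≤ p i) ∧ ∑ i, p i = 1 ∧ (∀ i, IsPureStabilizer d n (τ i)) ∧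
    ρ = ∑ i, (p i : ℂ) • τ i

/-- `U` is a Clifford unitary: a unitary mapping each Weyl operator, under conjugation,
to a complex phase times a Weyl operator. -/
noncomputable def IsClifford (d n : ℕ) [Fact (Nat.Prime d)] (U : Mat d n) : Prop :=
  U ∈ Matrix.unitaryGroup (QV d n) ℂ ∧
    ∀ pq : QV d n × QV d n, ∃ (c : ℂ) (pq' : QV d n × QV d n),
      ‖c‖ = 1 ∧ U * weyl d n pq.1 pq.2 * Uᴴ = c • weyl d n pq'.1 pq'.2

/-- The divergence-based quantum Fisher information `J(ρ; H) = Tr[ρ [H,[H, log ρ]]]`. -/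
noncomputable def fisherJ {d n : ℕ} [Fact (Nat.Prime d)] (ρ H : Mat d n) : ℝ :=
  (ρ * (H * (H * matLog ρ - matLog ρ * H) - (H * matLog ρ - matLog ρ * H) * H)).trace.re

/-- Embed a single-qudit operator at site `k` of an `n`-qudit system
(tensored with the identity elsewhere). -/
noncomputable def embedAt (d n : ℕ) (k : Fin n) (M : Matrix (ZMod d) (ZMod d) ℂ) :
    Mat d n :=
  Matrix.of fun v w => if ∀ i, i ≠ k → v i = w i then M (v k) (w k) else 0

/-- The rank-one projection `H_j^Z = |j⟩⟨j|` onto the eigenvector of `Z`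
with eigenvalue `ξ^j`. -/
noncomputable def projZ (d : ℕ) (j : ZMod d) : Matrix (ZMod d) (ZMod d) ℂ :=
  Matrix.of fun a b => if a = j ∧ b = j then 1 else 0

/-- The rank-one projection `H_j^X` onto the eigenvector of `X` with eigenvalue `ξ^j`;
its entries are `(H_j^X)_{a b} = d⁻¹ ξ^{j(b-a)}`. -/
noncomputable def projX (d : ℕ) (j : ZMod d) : Matrix (ZMod d) (ZMod d) ℂ :=
  Matrix.of fun a b => (d : ℂ)⁻¹ * ch d (j * (b - a))

/-- Total Fisher information
`J(ρ) = ∑_{k=1}^n ∑_{j ∈ ℤ_d} J(ρ; H_j^{X_k}) + J(ρ; H_j^{Z_k})`. -/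
noncomputable def fisherTotal (d n : ℕ) [Fact (Nat.Prime d)] (ρ : Mat d n) : ℝ :=
  ∑ k : Fin n, ∑ j : ZMod d,
    (fisherJ ρ (embedAt d n k (projX d j)) + fisherJ ρ (embedAt d n k (projZ d j)))

/-- Holevo capacity of a channel `E`:
`χ(E) = sup H(∑ p_i E(ρ_i)) - ∑ p_i H(E(ρ_i))` over finite ensembles of states. -/
noncomputable def holevoCap (d n : ℕ) [Fact (Nat.Prime d)] (E : Mat d n → Mat d n) : ℝ :=
  ⨆ m : ℕ, ⨆ p : Fin m → ℝ, ⨆ ρs : Fin m → Mat d n,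
    ⨆ _ : (∀ i, 0 ≤ p i) ∧ ∑ i, p i = 1 ∧ ∀ i, IsState d n (ρs i),
      (vnEnt (∑ i, (p i : ℂ) • E (ρs i)) - ∑ i, p i * vnEnt (E (ρs i)))

/-- Hilbert–Schmidt norm `‖A‖₂ = (Tr[A†A])^{1/2}`. -/
noncomputable def hsNorm {d n : ℕ} [Fact (Nat.Prime d)] (A : Mat d n) : ℝ :=
  Real.sqrt ((Aᴴ * A).trace.re)

/-- Trace norm `‖A‖₁ = Tr[(A†A)^{1/2}]`. -/
noncomputable def trNorm {d n : ℕ} [Fact (Nat.Prime d)] (A : Mat d n) : ℝ :=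
  (matRpow (Aᴴ * A) (2⁻¹ : ℝ)).trace.re

/-- Tensor product of an `n₁`-qudit operator with an `n₂`-qudit operator,
as an `(n₁+n₂)`-qudit operator. -/
def tensorMat (d n₁ n₂ : ℕ) (ρ₁ : Mat d n₁) (ρ₂ : Mat d n₂) : Mat d (n₁ + n₂) :=
  Matrix.of fun v w =>
    ρ₁ (fun i => v (Fin.castAdd n₂ i)) (fun i => w (Fin.castAdd n₂ i)) *
    ρ₂ (fun j => v (Fin.natAdd n₁ j)) (fun j => w (Fin.natAdd n₁ j))

/-! ### Qubit (`d = 2`) specific definitions -/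

/-- The `n`-qubit Weyl (Pauli) operator `w(p,q) = ⊗_i i^{-p_i q_i} Z^{p_i} X^{q_i}`. -/
noncomputable def weyl2 (n : ℕ) (p q : Fin n → ZMod 2) :
    Matrix (Fin n → ZMod 2) (Fin n → ZMod 2) ℂ :=
  Matrix.of fun k' k =>
    if k' = k + q then
      ∏ i, ((-Complex.I) ^ ((p i).val * (q i).val) *
        (-1 : ℂ) ^ ((p i * (k i + q i)).val))
    else 0

/-- The `n`-qubit characteristic function `Ξ_ρ(p,q) = Tr[ρ w(p,q)†]`. -/
noncomputable def xi2 (n : ℕ) (ρ : Matrix (Fin n → ZMod 2) (Fin n → ZMod 2) ℂ)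
    (pq : (Fin n → ZMod 2) × (Fin n → ZMod 2)) : ℂ :=
  (ρ * (weyl2 n pq.1 pq.2)ᴴ).trace

/-- The logarithmic magic gap
`LMG(ρ) = -log₂ max{|Ξ_ρ(p,q)| : Ξ_ρ(p,q) ≠ 0, |Ξ_ρ(p,q)| ≠ 1}` (`0` if the set is
empty). -/
noncomputable def lmg (n : ℕ) (ρ : Matrix (Fin n → ZMod 2) (Fin n → ZMod 2) ℂ) : ℝ :=
  let s : Finset ℝ :=
    (Finset.univ.filter fun pq : (Fin n → ZMod 2) × (Fin n → ZMod 2) =>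
      xi2 n ρ pq ≠ 0 ∧ ‖xi2 n ρ pq‖ ≠ 1).image
      fun pq => ‖xi2 n ρ pq‖
  if h : s.Nonempty then -Real.logb 2 (s.max' h) else 0

/-- `U` is an `n`-qubit Clifford unitary. -/
noncomputable def IsClifford2 (n : ℕ) (U : Matrix (Fin n → ZMod 2) (Fin n → ZMod 2) ℂ) :
    Prop :=
  U ∈ Matrix.unitaryGroup (Fin n → ZMod 2) ℂ ∧
    ∀ pq : (Fin n → ZMod 2) × (Fin n → ZMod 2),
      ∃ (c : ℂ) (pq' : (Fin n → ZMod 2) × (Fin n → ZMod 2)),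
        ‖c‖ = 1 ∧ U * weyl2 n pq.1 pq.2 * Uᴴ = c • weyl2 n pq'.1 pq'.2

/-- The T gate `diag(1, e^{iπ/4})` acting on qubit `k` of an `n`-qubit system. -/
noncomputable def tGateAt (n : ℕ) (k : Fin n) :
    Matrix (Fin n → ZMod 2) (Fin n → ZMod 2) ℂ :=
  embedAt 2 n k (Matrix.of fun a b =>
    if a = b then (if a = 0 then 1 else Complex.exp (Real.pi * Complex.I / 4)) else 0)

/-- An `n`-qubit state: positive semidefinite with trace one. -/
def IsState2 (n : ℕ) (ρ : Matrix (Fin n → ZMod 2) (Fin n → ZMod 2) ℂ) : Prop :=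
  ρ.PosSemidef ∧ ρ.trace = 1

end PaperQI

namespace PaperQI

section Chars
variable {d n : ℕ} [Fact (Nat.Prime d)]

theorem ch_eq (z : ZMod d) : ch d z = ZMod.stdAddChar z := by
  rw [ZMod.stdAddChar_apply, ZMod.toCircle_apply]; rfl

theorem ch_add (x y : ZMod d) : ch d (x + y) = ch d x * ch d y := by
  simp only [ch_eq, AddChar.map_add_eq_mul]

theorem ch_zero : ch d (0 : ZMod d) = 1 := by
  simp only [ch_eq, AddChar.map_zero_eq_one]

theorem norm_ch (x : ZMod d) : ‖ch d x‖ = 1 := by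
  rw [ch_eq]; exact AddChar.norm_apply _ _

theorem star_ch (x : ZMod d) : star (ch d x) = ch d (-x) := by
  rw [ch_eq, ch_eq, AddChar.map_neg_eq_conj]; rfl

theorem ch_ne_zero (x : ZMod d) : ch d x ≠ 0 := by
  intro h
  have := norm_ch x
  rw [h] at this
  simp at this

theorem ch_eq_one_iff (x : ZMod d) : ch d x = 1 ↔ x = 0 := by
  constructor
  · intro h
    apply ZMod.injective_stdAddChar
    rw [← ch_eq, ← ch_eq, h, ch_zero]
  · rintro rfl; exact ch_zero

theorem qdot_eq (p k : QV d n) : qdot p k = p ⬝ᵥ k := rfl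

theorem qdot_add_left (p p' k : QV d n) : qdot (p + p') k = qdot p k + qdot p' k := by
  simp only [qdot_eq, add_dotProduct]
theorem qdot_add_right (p k k' : QV d n) : qdot p (k + k') = qdot p k + qdot p k' := by
  simp only [qdot_eq, dotProduct_add]
theorem qdot_sub_left (p p' k : QV d n) : qdot (p - p') k = qdot p k - qdot p' k := by
  simp only [qdot_eq, sub_dotProduct]
theorem qdot_sub_right (p k k' : QV d n) : qdot p (k - k') = qdot p k - qdot p k' := by
  simp only [qdot_eq, dotProduct_sub]
theorem qdot_neg_left (p k : QV d n) : qdot (-p) k = - qdot p k := by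
  simp only [qdot_eq, neg_dotProduct]
theorem qdot_neg_right (p k : QV d n) : qdot p (-k) = - qdot p k := by
  simp only [qdot_eq, dotProduct_neg]
theorem qdot_smul_left (c : ZMod d) (p k : QV d n) : qdot (c • p) k = c * qdot p k := by
  simp only [qdot_eq, smul_dotProduct, smul_eq_mul]
theorem qdot_smul_right (c : ZMod d) (p k : QV d n) : qdot p (c • k) = c * qdot p k := by
  simp only [qdot_eq, dotProduct_smul, smul_eq_mul]
theorem qdot_zero_left (k : QV d n) : qdot 0 k = 0 := by
  simp only [qdot_eq, zero_dotProduct]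
theorem qdot_zero_right (k : QV d n) : qdot k 0 = 0 := by
  simp only [qdot_eq, dotProduct_zero]
theorem qdot_comm (p k : QV d n) : qdot p k = qdot k p := by
  simp only [qdot_eq, dotProduct_comm]

theorem card_QV : Fintype.card (QV d n) = d ^ n := by
  simp [ZMod.card]

/-- Orthogonality of characters on `ℤ_d^n`. -/
theorem sum_ch (k : QV d n) :
    ∑ p : QV d n, ch d (qdot p k) = if k = 0 then (d : ℂ) ^ n else 0 := by
  split_ifs with h
  · subst h
    simp only [qdot_zero_right, ch_zero, Finset.sum_const, Finset.card_univ, card_QV]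
    simp
  · obtain ⟨i, hi⟩ : ∃ i, k i ≠ 0 := by
      by_contra hc
      push Not at hc
      exact h (funext hc)
    set p0 : QV d n := Pi.single i (1 : ZMod d) with hp0
    have h1 : qdot p0 k = k i := by
      rw [qdot_eq, hp0, single_dotProduct, one_mul]
    have h2 : ∑ p : QV d n, ch d (qdot p k) = ch d (k i) * ∑ p : QV d n, ch d (qdot p k) := by
      rw [Finset.mul_sum]
      rw [← Equiv.sum_comp (Equiv.addLeft p0)]
      refine Finset.sum_congr rfl fun p _ => ?_
      rw [Equiv.coe_addLeft, qdot_add_left, h1, ch_add]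
    have h3 : (ch d (k i) - 1) * ∑ p : QV d n, ch d (qdot p k) = 0 := by
      rw [sub_mul, one_mul, ← h2, sub_self]
    rcases mul_eq_zero.1 h3 with h4 | h4
    · exact absurd ((ch_eq_one_iff _).1 (sub_eq_zero.1 h4)) hi
    · exact h4

theorem sum_ch' (k : QV d n) :
    ∑ p : QV d n, ch d (qdot k p) = if k = 0 then (d : ℂ) ^ n else 0 := by
  rw [← sum_ch]
  exact Finset.sum_congr rfl fun p _ => by rw [qdot_comm]

/-- The symplectic form. -/
def symp (x y : QV d n × QV d n) : ZMod d := qdot x.1 y.2 - qdot y.1 x.2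

theorem two_inv (hd : Odd d) : (2 : ZMod d)⁻¹ + (2 : ZMod d)⁻¹ = 1 := by
  have h2 : (2 : ZMod d) ≠ 0 := by
    intro h
    have : ((2 : ℕ) : ZMod d) = 0 := by exact_mod_cast h
    rw [ZMod.natCast_eq_zero_iff] at this
    have hp : d.Prime := Fact.out
    have := (Nat.prime_dvd_prime_iff_eq hp Nat.prime_two).1 this
    subst this
    exact absurd hd (by decide)
  rw [← two_mul, mul_inv_cancel₀ h2]

theorem weyl_apply (p q a b : QV d n) : weyl d n p q a b =
    if a = b + q then ch d (qdot p b + (2 : ZMod d)⁻¹ * qdot p q) else 0 := rfl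

theorem weyl_mul (hd : Odd d) (x y : QV d n × QV d n) :
    weyl d n x.1 x.2 * weyl d n y.1 y.2 =
      ch d ((2 : ZMod d)⁻¹ * symp x y) • weyl d n (x.1 + y.1) (x.2 + y.2) := by
  ext a b
  rw [Matrix.mul_apply, Matrix.smul_apply]
  rw [Finset.sum_eq_single (b + y.2)]
  · simp only [weyl_apply, if_true]
    by_cases h : a = b + (x.2 + y.2)
    · have h' : a = b + y.2 + x.2 := by rw [h]; abel
      rw [if_pos h, if_pos h', ← ch_add, smul_eq_mul, ← ch_add]
      congr 1
      simp only [symp, qdot_add_left, qdot_add_right]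
      linear_combination (-(qdot x.1 y.2)) * two_inv hd
    · have h' : ¬ a = b + y.2 + x.2 := by
        intro hh; apply h; rw [hh]; abel
      rw [if_neg h, if_neg h']; simp
  · intro c _ hc
    simp only [weyl_apply]
    rw [if_neg hc, mul_zero]
  · simp

theorem weyl_conjTranspose (hd : Odd d) (p q : QV d n) :
    (weyl d n p q)ᴴ = weyl d n (-p) (-q) := by
  ext a b
  rw [conjTranspose_apply]
  simp only [weyl_apply]
  by_cases h : b = a + q
  · have h' : a = b + -q := by rw [h]; abel
    rw [if_pos h, if_pos h', star_ch]
    congr 1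
    subst h
    simp only [qdot_neg_left, qdot_neg_right, qdot_add_right]
    linear_combination (-(qdot p q)) * two_inv hd
  · have h' : ¬ a = b + -q := by
      intro hh; apply h; rw [hh]; abel
    rw [if_neg h, if_neg h', star_zero]

theorem weyl_zero : weyl d n 0 0 = 1 := by
  ext a b
  simp only [weyl_apply, Matrix.one_apply, qdot_zero_left, add_zero, mul_zero, ch_zero]

theorem symp_self_neg (x : QV d n × QV d n) : symp x (-x) = 0 := by
  simp only [symp, Prod.fst_neg, Prod.snd_neg, qdot_neg_left, qdot_neg_right]; ring

theorem weyl_mul_neg (hd : Odd d) (x : QV d n × QV d n) :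
    weyl d n x.1 x.2 * weyl d n (-x.1) (-x.2) = 1 := by
  have := weyl_mul hd x (-x)
  rw [symp_self_neg] at this
  simpa [ch_zero, weyl_zero] using this

theorem weyl_neg_mul (hd : Odd d) (x : QV d n × QV d n) :
    weyl d n (-x.1) (-x.2) * weyl d n x.1 x.2 = 1 := by
  have := weyl_mul_neg hd (-x)
  simpa using this

theorem weyl_trace (x : QV d n × QV d n) :
    (weyl d n x.1 x.2).trace = if x = 0 then (d : ℂ) ^ n else 0 := by
  obtain ⟨p, q⟩ := x
  simp only [Matrix.trace, Matrix.diag_apply, weyl_apply]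
  by_cases hq : q = 0
  · subst hq
    simp only [add_zero, if_true, qdot_zero_right, mul_zero]
    rw [sum_ch']
    by_cases hp : p = 0 <;> simp [hp]
  · have : ∀ a : QV d n, ¬ a = a + q := by
      intro a h; exact hq (by simpa using h)
    simp [this, hq]

theorem xi_apply (ρ : Mat d n) (x : QV d n × QV d n) :
    xi d n ρ x = ∑ k, ρ k (k - x.2) *
      ch d (- qdot x.1 k + (2 : ZMod d)⁻¹ * qdot x.1 x.2) := by
  simp only [xi, Matrix.trace, Matrix.diag_apply, Matrix.mul_apply, weyl_apply]
  refine Finset.sum_congr rfl fun k _ => ?_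
  rw [Finset.sum_eq_single (k - x.2)]
  · rw [if_pos (sub_eq_add_neg _ _), qdot_neg_left, qdot_neg_left, qdot_neg_right, neg_neg]
  · intro b _ hb
    rw [if_neg (by rwa [← sub_eq_add_neg]), mul_zero]
  · simp

theorem xi_zero (ρ : Mat d n) : xi d n ρ 0 = ρ.trace := by
  simp [xi, weyl_zero]

theorem xi_weyl (hd : Odd d) (x y : QV d n × QV d n) :
    xi d n (weyl d n y.1 y.2) x = if x = y then (d : ℂ) ^ n else 0 := by
  have := weyl_mul hd y (-x)
  simp only [Prod.fst_neg, Prod.snd_neg] at this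
  rw [xi, this, trace_smul]
  have h2 := weyl_trace (y + -x)
  simp only [Prod.fst_add, Prod.snd_add, Prod.fst_neg, Prod.snd_neg] at h2
  rw [h2]
  by_cases h : x = y
  · subst h
    simp [symp_self_neg, ch_zero]
  · rw [if_neg h, if_neg, smul_zero]
    intro hh; exact h (by rw [← sub_eq_add_neg, sub_eq_zero] at hh; exact hh.symm)

/-- Hilbert–Schmidt purity. -/
noncomputable def purity (ρ : Mat d n) : ℝ := ∑ a, ∑ b, ‖ρ a b‖ ^ 2

theorem parseval_vec (f : QV d n → ℂ) :
    ∑ p : QV d n, ‖∑ k, f k * ch d (- qdot p k)‖ ^ 2 = (d : ℝ) ^ n * ∑ k, ‖f k‖ ^ 2 := by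
  have key : ∑ p : QV d n, ((∑ k, f k * ch d (- qdot p k)) *
      star (∑ k, f k * ch d (- qdot p k))) = (d : ℂ) ^ n * ∑ k, f k * star (f k) := by
    have : ∀ p : QV d n, ((∑ k, f k * ch d (- qdot p k)) *
      star (∑ k, f k * ch d (- qdot p k))) =
      ∑ k, ∑ l, f k * star (f l) * ch d (qdot p (l - k)) := by
      intro p
      rw [star_sum, Finset.sum_mul_sum]
      refine Finset.sum_congr rfl fun k _ => Finset.sum_congr rfl fun l _ => ?_
      rw [star_mul, star_ch, qdot_sub_right, neg_neg, sub_eq_neg_add, ch_add]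
      ring
    simp only [this]
    rw [Finset.sum_comm]
    rw [Finset.mul_sum]
    refine Finset.sum_congr rfl fun k _ => ?_
    rw [Finset.sum_comm]
    simp only [← Finset.mul_sum, sum_ch, sub_eq_zero]
    simp [mul_comm]
  have hs : ∀ z : ℂ, z * star z = ((‖z‖ ^ 2 : ℝ) : ℂ) := by
    intro z
    rw [← Complex.normSq_eq_norm_sq]
    exact Complex.mul_conj z
  simp only [hs] at key
  exact_mod_cast key

theorem parseval (ρ : Mat d n) :
    ∑ x : QV d n × QV d n, ‖xi d n ρ x‖ ^ 2 = (d : ℝ) ^ n * purity ρ := by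
  rw [Fintype.sum_prod_type_right]
  have : ∀ q : QV d n, ∑ p : QV d n, ‖xi d n ρ (p, q)‖ ^ 2 =
      (d : ℝ) ^ n * ∑ k, ‖ρ k (k - q)‖ ^ 2 := by
    intro q
    rw [← parseval_vec]
    refine Finset.sum_congr rfl fun p _ => ?_
    rw [xi_apply]
    simp only [ch_add, ← mul_assoc]
    rw [← Finset.sum_mul, norm_mul, norm_ch, mul_one]
  simp only [this]
  rw [← Finset.mul_sum, Finset.sum_comm, purity]
  congr 1
  refine Finset.sum_congr rfl fun k _ => ?_
  exact Equiv.sum_comp (Equiv.subLeft k) (fun b => ‖ρ k b‖ ^ 2)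

end Chars

section Spectral
variable {d n : ℕ} [Fact (Nat.Prime d)]

theorem spectral_entry {ρ : Mat d n} (h : ρ.IsHermitian) (a b : QV d n) :
    ρ a b = ∑ i, (h.eigenvalues i : ℂ) * ((h.eigenvectorUnitary : Mat d n) a i *
      star ((h.eigenvectorUnitary : Mat d n) b i)) := by
  conv_lhs => rw [h.spectral_theorem]
  rw [Unitary.conjStarAlgAut_apply, Matrix.mul_apply]
  refine Finset.sum_congr rfl fun i _ => ?_
  rw [Matrix.mul_diagonal, Matrix.star_apply]
  simp only [Function.comp, Complex.coe_algebraMap, RCLike.ofReal, RCLike.star_def]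
  ring

theorem unitary_row {ρ : Mat d n} (h : ρ.IsHermitian) (i : QV d n) :
    ∑ a, ‖(h.eigenvectorUnitary : Mat d n) a i‖ ^ 2 = 1 := by
  have h1 : star (h.eigenvectorUnitary : Mat d n) * (h.eigenvectorUnitary : Mat d n) = 1 :=
    Unitary.coe_star_mul_self _
  have h2 := congrFun (congrFun h1 i) i
  rw [Matrix.mul_apply, Matrix.one_apply_eq] at h2
  simp only [Matrix.star_apply] at h2
  have hs : ∀ z : ℂ, star z * z = ((‖z‖ ^ 2 : ℝ) : ℂ) := by
    intro z
    rw [← Complex.normSq_eq_norm_sq, mul_comm]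
    exact Complex.mul_conj z
  simp only [hs] at h2
  exact_mod_cast h2

theorem purity_eq_trace {ρ : Mat d n} (h : ρ.IsHermitian) :
    ((purity ρ : ℝ) : ℂ) = (ρ * ρ).trace := by
  simp only [purity, Matrix.trace, Matrix.diag_apply, Matrix.mul_apply]
  push_cast
  refine Finset.sum_congr rfl fun a _ => Finset.sum_congr rfl fun b _ => ?_
  rw [← h.apply b a]
  have : ρ a b * star (ρ a b) = ((‖ρ a b‖ ^ 2 : ℝ) : ℂ) := by
    rw [← Complex.normSq_eq_norm_sq]
    exact Complex.mul_conj _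
  rw [this]; push_cast; rfl

theorem purity_eq_sum {ρ : Mat d n} (h : ρ.IsHermitian) :
    purity ρ = ∑ i, h.eigenvalues i ^ 2 := by
  have h0 := purity_eq_trace h
  have h1 : (ρ * ρ).trace = ∑ i, ((h.eigenvalues i ^ 2 : ℝ) : ℂ) := by
    conv_lhs => rw [h.spectral_theorem]
    rw [← map_mul, Unitary.conjStarAlgAut_apply, Matrix.trace_mul_cycle,
      Unitary.coe_star_mul_self, one_mul, Matrix.diagonal_mul_diagonal, Matrix.trace_diagonal]
    refine Finset.sum_congr rfl fun i _ => ?_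
    simp [sq]
  rw [h1] at h0
  exact_mod_cast h0

theorem eig_sum {ρ : Mat d n} (h : IsState d n ρ) : ∑ i, h.1.1.eigenvalues i = 1 := by
  have h1 := h.1.1.trace_eq_sum_eigenvalues
  have h2 : ((1 : ℝ) : ℂ) = ((∑ i, h.1.1.eigenvalues i : ℝ) : ℂ) := by
    push_cast; exact h.2.symm.trans h1
  exact_mod_cast h2.symm

theorem eig_nonneg {ρ : Mat d n} (h : IsState d n ρ) (i : QV d n) :
    0 ≤ h.1.1.eigenvalues i := h.1.eigenvalues_nonneg i

theorem eig_le_one {ρ : Mat d n} (h : IsState d n ρ) (i : QV d n) :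
    h.1.1.eigenvalues i ≤ 1 := by
  rw [← eig_sum h]
  exact Finset.single_le_sum (fun j _ => eig_nonneg h j) (Finset.mem_univ i)

theorem purity_le_one {ρ : Mat d n} (h : IsState d n ρ) : purity ρ ≤ 1 := by
  rw [purity_eq_sum h.1.1, ← eig_sum h]
  refine Finset.sum_le_sum fun i _ => ?_
  nlinarith [eig_nonneg h i, eig_le_one h i]

theorem vnEnt_eq {ρ : Mat d n} (h : ρ.IsHermitian) :
    vnEnt ρ = -∑ i, h.eigenvalues i * Real.log (h.eigenvalues i) := by
  rw [vnEnt, dif_pos h]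

theorem vnEnt_ge {ρ : Mat d n} (h : IsState d n ρ) : 1 - purity ρ ≤ vnEnt ρ := by
  rw [vnEnt_eq h.1.1, purity_eq_sum h.1.1]
  conv_lhs => rw [← eig_sum h]
  rw [← Finset.sum_sub_distrib, ← Finset.sum_neg_distrib]
  refine Finset.sum_le_sum fun i _ => ?_
  rcases (eig_nonneg h i).eq_or_lt with h0 | h0
  · rw [← h0]; simp
  · nlinarith [Real.log_le_sub_one_of_pos h0]

theorem vnEnt_le {ρ : Mat d n} (h : IsState d n ρ) : vnEnt ρ ≤ n * Real.log d := by
  have hd0 : (0 : ℝ) < d := by exact_mod_cast (Fact.out : d.Prime).pos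
  have hD : (0 : ℝ) < (d : ℝ) ^ n := by positivity
  rw [← Real.log_pow, vnEnt_eq h.1.1]
  have h1 : ∀ i, -(h.1.1.eigenvalues i * Real.log (h.1.1.eigenvalues i)) ≤
      h.1.1.eigenvalues i * Real.log ((d : ℝ) ^ n) +
        (((d : ℝ) ^ n)⁻¹ - h.1.1.eigenvalues i) := by
    intro i
    rcases (eig_nonneg h i).eq_or_lt with h0 | h0
    · rw [← h0]; simp
    · set l := h.1.1.eigenvalues i
      have h2 := Real.log_le_sub_one_of_pos (x := ((d : ℝ) ^ n * l)⁻¹) (by positivity)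
      rw [Real.log_inv, Real.log_mul hD.ne' h0.ne'] at h2
      have h3 := mul_le_mul_of_nonneg_left h2 h0.le
      have h4 : l * (((d : ℝ) ^ n * l)⁻¹ - 1) = ((d : ℝ) ^ n)⁻¹ - l := by
        field_simp
      rw [h4] at h3
      linarith
  rw [← Finset.sum_neg_distrib]
  refine (Finset.sum_le_sum fun i _ => h1 i).trans ?_
  rw [Finset.sum_add_distrib, ← Finset.sum_mul, Finset.sum_sub_distrib, eig_sum h,
    Finset.sum_const, Finset.card_univ, card_QV]
  simp [hD.ne']

theorem eig_zero_or_one {ρ : Mat d n} (h : IsState d n ρ) (hp : purity ρ = 1) (i : QV d n) :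
    h.1.1.eigenvalues i = 0 ∨ h.1.1.eigenvalues i = 1 := by
  have h1 : ∑ j, (h.1.1.eigenvalues j - h.1.1.eigenvalues j ^ 2) = 0 := by
    rw [Finset.sum_sub_distrib, eig_sum h, ← purity_eq_sum, hp, sub_self]
  have h2 := (Finset.sum_eq_zero_iff_of_nonneg (fun j _ => by
    nlinarith [eig_nonneg h j, eig_le_one h j])).1 h1 i (Finset.mem_univ i)
  have h3 : h.1.1.eigenvalues i * (1 - h.1.1.eigenvalues i) = 0 := by linarith
  rcases mul_eq_zero.1 h3 with h4 | h4
  · exact Or.inl h4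
  · exact Or.inr (by linarith)

theorem vnEnt_pure {ρ : Mat d n} (h : IsState d n ρ) (hp : purity ρ = 1) : vnEnt ρ = 0 := by
  rw [vnEnt_eq h.1.1, neg_eq_zero]
  refine Finset.sum_eq_zero fun i _ => ?_
  rcases eig_zero_or_one h hp i with h1 | h1 <;> rw [h1] <;> simp

theorem vnEnt_mixed {ρ : Mat d n} (h : IsState d n ρ) (hp : purity ρ = ((d : ℝ) ^ n)⁻¹) :
    vnEnt ρ = n * Real.log d := by
  have hd0 : (0 : ℝ) < d := by exact_mod_cast (Fact.out : d.Prime).pos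
  have hD : (0 : ℝ) < (d : ℝ) ^ n := by positivity
  set D := (d : ℝ) ^ n with hDdef
  have h1 : ∑ j, (h.1.1.eigenvalues j - D⁻¹) ^ 2 = 0 := by
    have : ∀ j, (h.1.1.eigenvalues j - D⁻¹) ^ 2 =
      h.1.1.eigenvalues j ^ 2 - 2 * D⁻¹ * h.1.1.eigenvalues j + D⁻¹ ^ 2 := by
      intro j; ring
    simp only [this]
    rw [Finset.sum_add_distrib, Finset.sum_sub_distrib, ← Finset.mul_sum, eig_sum h,
      ← purity_eq_sum, hp, Finset.sum_const, Finset.card_univ, card_QV, nsmul_eq_mul]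
    push_cast
    rw [← hDdef]
    field_simp
    ring
  have h2 : ∀ i, h.1.1.eigenvalues i = D⁻¹ := by
    intro i
    have := (Finset.sum_eq_zero_iff_of_nonneg (fun j _ => sq_nonneg _)).1 h1 i (Finset.mem_univ i)
    have := pow_eq_zero_iff (two_ne_zero) |>.1 this
    linarith
  rw [vnEnt_eq h.1.1]
  simp only [h2]
  rw [Finset.sum_const, Finset.card_univ, card_QV, nsmul_eq_mul, Real.log_inv, ← Real.log_pow]
  push_cast
  rw [← hDdef]
  field_simp

theorem pure_vec {ρ : Mat d n} (h : IsState d n ρ) (hp : purity ρ = 1) :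
    ∃ ψ : QV d n → ℂ, ρ = Matrix.of (fun a b => ψ a * starRingEnd ℂ (ψ b)) := by
  obtain ⟨i, hi⟩ : ∃ i, h.1.1.eigenvalues i = 1 := by
    by_contra hc
    push Not at hc
    have : ∑ i, h.1.1.eigenvalues i = 0 := Finset.sum_eq_zero fun i _ =>
      (eig_zero_or_one h hp i).resolve_right (hc i)
    rw [eig_sum h] at this
    exact one_ne_zero this
  have hj : ∀ j, j ≠ i → h.1.1.eigenvalues j = 0 := by
    intro j hj
    have h1 := eig_sum h
    rw [← Finset.add_sum_erase _ _ (Finset.mem_univ i), hi] at h1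
    have h2 : ∑ x ∈ Finset.univ.erase i, h.1.1.eigenvalues x = 0 := by linarith
    exact (Finset.sum_eq_zero_iff_of_nonneg (fun j _ => eig_nonneg h j)).1 h2 j
      (by simp [hj])
  refine ⟨fun a => (h.1.1.eigenvectorUnitary : Mat d n) a i, ?_⟩
  ext a b
  rw [spectral_entry h.1.1, Finset.sum_eq_single i]
  · rw [hi]; simp
  · intro j _ hji; rw [hj j hji]; simp
  · simp

theorem xi_norm_le {ρ : Mat d n} (h : IsState d n ρ) (x : QV d n × QV d n) :
    ‖xi d n ρ x‖ ≤ 1 := by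
  rw [xi_apply]
  refine (norm_sum_le _ _).trans ?_
  simp only [norm_mul, norm_ch, mul_one]
  set U := (h.1.1.eigenvectorUnitary : Mat d n) with hU
  have h1 : ∀ k, ‖ρ k (k - x.2)‖ ≤ ∑ i, h.1.1.eigenvalues i *
      ((‖U k i‖ ^ 2 + ‖U (k - x.2) i‖ ^ 2) / 2) := by
    intro k
    rw [spectral_entry h.1.1]
    refine (norm_sum_le _ _).trans (Finset.sum_le_sum fun i _ => ?_)
    rw [norm_mul, norm_mul, norm_star, Complex.norm_real, Real.norm_eq_abs,
      abs_of_nonneg (eig_nonneg h i)]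
    refine mul_le_mul_of_nonneg_left ?_ (eig_nonneg h i)
    nlinarith [sq_nonneg (‖U k i‖ - ‖U (k - x.2) i‖)]
  refine (Finset.sum_le_sum fun k _ => h1 k).trans ?_
  rw [Finset.sum_comm]
  simp only [← Finset.mul_sum]
  have h2 : ∀ i, ∑ k, (‖U k i‖ ^ 2 + ‖U (k - x.2) i‖ ^ 2) / 2 = 1 := by
    intro i
    have h3 : ∑ k, ‖U (k - x.2) i‖ ^ 2 = ∑ k, ‖U k i‖ ^ 2 :=
      Equiv.sum_comp (Equiv.subRight x.2) (fun k => ‖U k i‖ ^ 2)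
    rw [← Finset.sum_div, Finset.sum_add_distrib, h3, unitary_row h.1.1]
    norm_num
  simp only [h2, mul_one, eig_sum h]
  exact le_rfl

end Spectral

section Conv
variable {d n : ℕ} [Fact (Nat.Prime d)]

/-- The classical linear bijection `(k,l) ↦ (g₀₀ k + g₁₀ l, g₀₁ k + g₁₁ l)`. -/
noncomputable def gEquiv {g00 g01 g10 g11 : ZMod d} (hdet : g00 * g11 - g01 * g10 ≠ 0) :
    (QV d n × QV d n) ≃ (QV d n × QV d n) where
  toFun x := (g00 • x.1 + g10 • x.2, g01 • x.1 + g11 • x.2)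
  invFun y := ((g00 * g11 - g01 * g10)⁻¹ • (g11 • y.1 - g10 • y.2),
    (g00 * g11 - g01 * g10)⁻¹ • (g00 • y.2 - g01 • y.1))
  left_inv x := by
    ext a <;> simp <;> field_simp <;> ring
  right_inv y := by
    ext a <;> simp <;> field_simp <;> ring

theorem convU_apply {g00 g01 g10 g11 : ZMod d} (hdet : g00 * g11 - g01 * g10 ≠ 0)
    (x y : QV d n × QV d n) :
    convU d n g00 g01 g10 g11 x y = if y = gEquiv hdet x then 1 else 0 := by
  have h : ((fun a => (g00 * g11 - g01 * g10)⁻¹ * g11 * y.1 a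
                      - (g00 * g11 - g01 * g10)⁻¹ * g10 * y.2 a : QV d n),
             (fun a => -((g00 * g11 - g01 * g10)⁻¹ * g01) * y.1 a
                      + (g00 * g11 - g01 * g10)⁻¹ * g00 * y.2 a : QV d n)) =
        (gEquiv hdet).symm y := by
    ext a <;> simp [gEquiv] <;> ring
  simp only [convU, Matrix.of_apply]
  rw [h]
  have : (x = (gEquiv hdet).symm y) ↔ (y = gEquiv hdet x) := by
    rw [Equiv.eq_symm_apply, eq_comm]
  simp only [this]

theorem conv_apply {g00 g01 g10 g11 : ZMod d} (hdet : g00 * g11 - g01 * g10 ≠ 0)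
    (ρ σ : Mat d n) (k k' : QV d n) :
    conv d n g00 g01 g10 g11 ρ σ k k' =
      ∑ l, ρ (g00 • k + g10 • l) (g00 • k' + g10 • l) *
        σ (g01 • k + g11 • l) (g01 • k' + g11 • l) := by
  simp only [conv, ptrB, Matrix.of_apply]
  refine Finset.sum_congr rfl fun l _ => ?_
  rw [Matrix.mul_apply, Finset.sum_eq_single (gEquiv hdet (k', l))]
  · rw [Matrix.mul_apply, Finset.sum_eq_single (gEquiv hdet (k, l))]
    · rw [conjTranspose_apply, convU_apply hdet, convU_apply hdet, if_pos rfl, if_pos rfl]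
      simp [kron, gEquiv]
    · intro b _ hb
      rw [convU_apply hdet, if_neg hb, zero_mul]
    · simp
  · intro b _ hb
    rw [conjTranspose_apply, convU_apply hdet, if_neg hb, star_zero, mul_zero]
  · simp

theorem xi_conv {g00 g01 g10 g11 : ZMod d} (hdet : g00 * g11 - g01 * g10 ≠ 0)
    (ρ σ : Mat d n) (p q : QV d n) :
    xi d n (conv d n g00 g01 g10 g11 ρ σ) (p, q) =
      xi d n ρ (((g00 * g11 - g01 * g10)⁻¹ * g11) • p, g00 • q) *
      xi d n σ ((-((g00 * g11 - g01 * g10)⁻¹ * g10)) • p, g01 • q) := by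
  rw [xi_apply, xi_apply, xi_apply, Finset.sum_mul_sum, ← Fintype.sum_prod_type',
    ← Equiv.sum_comp (gEquiv (n := n) hdet)]
  rw [Fintype.sum_prod_type]
  refine Finset.sum_congr rfl fun k _ => ?_
  rw [conv_apply hdet, Finset.sum_mul]
  refine Finset.sum_congr rfl fun l _ => ?_
  have e1 : g00 • (k - q) + g10 • l = g00 • k + g10 • l - g00 • q := by
    rw [smul_sub]; abel
  have e2 : g01 • (k - q) + g11 • l = g01 • k + g11 • l - g01 • q := by
    rw [smul_sub]; abel
  simp only [gEquiv, Equiv.coe_fn_mk, e1, e2]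
  have e3 : -qdot p k + (2 : ZMod d)⁻¹ * qdot p q =
     (-qdot (((g00 * g11 - g01 * g10)⁻¹ * g11) • p) (g00 • k + g10 • l) +
      (2 : ZMod d)⁻¹ * qdot (((g00 * g11 - g01 * g10)⁻¹ * g11) • p) (g00 • q)) +
     (-qdot ((-((g00 * g11 - g01 * g10)⁻¹ * g10)) • p) (g01 • k + g11 • l) +
      (2 : ZMod d)⁻¹ * qdot ((-((g00 * g11 - g01 * g10)⁻¹ * g10)) • p) (g01 • q)) := by
    simp only [qdot_smul_left, qdot_add_right, qdot_smul_right]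
    have hN : (g00 * g11 - g01 * g10)⁻¹ * (g00 * g11 - g01 * g10) = 1 := inv_mul_cancel₀ hdet
    linear_combination (qdot p k - (2 : ZMod d)⁻¹ * qdot p q) * hN
  rw [e3, ch_add]
  ring

theorem conv_isState {g00 g01 g10 g11 : ZMod d} (hdet : g00 * g11 - g01 * g10 ≠ 0)
    {ρ σ : Mat d n} (hρ : IsState d n ρ) (hσ : IsState d n σ) :
    IsState d n (conv d n g00 g01 g10 g11 ρ σ) := by
  constructor
  · have h1 : conv d n g00 g01 g10 g11 ρ σ = ∑ l, (kroneckerMap (fun a b => a * b) ρ σ).submatrix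
        (fun k => gEquiv hdet (k, l)) (fun k => gEquiv hdet (k, l)) := by
      ext k k'
      rw [conv_apply hdet, Matrix.sum_apply]
      rfl
    rw [h1]
    exact Matrix.posSemidef_sum _ fun l _ => (hρ.1.kronecker hσ.1).submatrix _
  · rw [← xi_zero]
    have := xi_conv hdet ρ σ 0 0
    simp only [smul_zero] at this
    change xi d n _ (0, 0) = 1
    rw [this]
    change xi d n ρ 0 * xi d n σ 0 = 1
    rw [xi_zero, xi_zero, hρ.2, hσ.2, one_mul]

theorem posSemidef_closed : IsClosed {ρ : Mat d n | IsState d n ρ} := by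
  have : {ρ : Mat d n | IsState d n ρ} =
      ({ρ : Mat d n | ρᴴ = ρ} ∩ ⋂ x : QV d n → ℂ, {ρ : Mat d n | 0 ≤ star x ⬝ᵥ (ρ *ᵥ x)}) ∩
        {ρ : Mat d n | ρ.trace = 1} := by
    ext ρ
    simp only [IsState, Matrix.posSemidef_iff_dotProduct_mulVec, Set.mem_ofPred_eq,
      Set.mem_inter_iff, Set.mem_iInter]
    rfl
  rw [this]
  refine IsClosed.inter (IsClosed.inter ?_ (isClosed_iInter fun x => ?_)) ?_
  · exact isClosed_eq (by fun_prop) (by fun_prop)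
  · exact isClosed_le (by fun_prop) (by fun_prop)
  · exact isClosed_eq (by fun_prop) (by fun_prop)

theorem states_compact : IsCompact {ρ : Mat d n | IsState d n ρ} := by
  have h1 : IsCompact (Set.univ.pi fun _ : QV d n => Set.univ.pi fun _ : QV d n =>
      Metric.closedBall (0 : ℂ) 1) :=
    isCompact_univ_pi fun _ => isCompact_univ_pi fun _ => isCompact_closedBall _ _
  refine IsCompact.of_isClosed_subset h1 posSemidef_closed ?_
  intro ρ hρ a _ b _
  rw [mem_closedBall_zero_iff]
  have h2 : ‖ρ a b‖ ^ 2 ≤ purity ρ := by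
    refine le_trans ?_ (Finset.single_le_sum (f := fun a => ∑ b, ‖ρ a b‖ ^ 2)
      (fun a _ => Finset.sum_nonneg fun b _ => sq_nonneg _) (Finset.mem_univ a))
    exact Finset.single_le_sum (f := fun b => ‖ρ a b‖ ^ 2)
      (fun b _ => sq_nonneg _) (Finset.mem_univ b)
  have h3 := h2.trans (purity_le_one hρ)
  nlinarith [norm_nonneg (ρ a b)]

theorem purity_conv_continuous {g00 g01 g10 g11 : ZMod d} (hdet : g00 * g11 - g01 * g10 ≠ 0)
    (σ : Mat d n) : Continuous fun ρ : Mat d n => purity (conv d n g00 g01 g10 g11 ρ σ) := by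
  simp only [purity, conv_apply hdet]
  fun_prop

end Conv

section Main
variable {d n : ℕ} [Fact (Nat.Prime d)]

/-- Scaling bijection of phase space. -/
def scaleEquiv {a b : ZMod d} (ha : a ≠ 0) (hb : b ≠ 0) :
    (QV d n × QV d n) ≃ (QV d n × QV d n) where
  toFun x := (a • x.1, b • x.2)
  invFun x := (a⁻¹ • x.1, b⁻¹ • x.2)
  left_inv x := by simp [smul_smul, ha, hb]
  right_inv x := by simp [smul_smul, ha, hb]

/-- `ψ` is an eigenvector of `w(x)`. -/
def Eig (ψ : QV d n → ℂ) (x : QV d n × QV d n) : Prop :=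
  ∃ c : ℂ, (weyl d n x.1 x.2).mulVec ψ = c • ψ

theorem eig_neg (hd : Odd d) {ψ : QV d n → ℂ} (hψ : ψ ≠ 0) {x : QV d n × QV d n}
    (h : Eig ψ x) : Eig ψ (-x) := by
  obtain ⟨c, hc⟩ := h
  have h1 : ψ = c • (weyl d n (-x.1) (-x.2)).mulVec ψ := by
    rw [← Matrix.mulVec_smul, ← hc, Matrix.mulVec_mulVec, weyl_neg_mul hd, Matrix.one_mulVec]
  have hc0 : c ≠ 0 := by
    rintro rfl
    rw [zero_smul] at h1
    exact hψ h1
  refine ⟨c⁻¹, ?_⟩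
  conv_rhs => rw [h1]
  rw [smul_smul, inv_mul_cancel₀ hc0, one_smul]
  rfl

theorem eig_add (hd : Odd d) {ψ : QV d n → ℂ} {x y : QV d n × QV d n}
    (hx : Eig ψ x) (hy : Eig ψ y) : Eig ψ (x + y) := by
  obtain ⟨c, hc⟩ := hx
  obtain ⟨c', hc'⟩ := hy
  have h1 := congrArg (fun M : Mat d n => M.mulVec ψ) (weyl_mul hd x y)
  rw [← Matrix.mulVec_mulVec, hc', Matrix.mulVec_smul, hc, Matrix.smul_mulVec] at h1
  refine ⟨(ch d ((2 : ZMod d)⁻¹ * symp x y))⁻¹ * (c' * c), ?_⟩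
  rw [mul_smul, mul_smul, h1, smul_smul, inv_mul_cancel₀ (ch_ne_zero _), one_smul]
  rfl

theorem xi_pure (ψ : QV d n → ℂ) (x : QV d n × QV d n) :
    xi d n (Matrix.of (fun a b => ψ a * starRingEnd ℂ (ψ b))) (-x) =
      star ψ ⬝ᵥ (weyl d n x.1 x.2).mulVec ψ := by
  simp only [xi, Matrix.trace, Matrix.diag_apply, Matrix.mul_apply, Matrix.of_apply,
    Prod.fst_neg, Prod.snd_neg, neg_neg, dotProduct, Matrix.mulVec, Finset.mul_sum]
  rw [Finset.sum_comm]
  refine Finset.sum_congr rfl fun a _ => Finset.sum_congr rfl fun b _ => ?_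
  simp only [Pi.star_apply, RCLike.star_def]
  ring

theorem norm_weyl (hd : Odd d) (ψ : QV d n → ℂ) (x : QV d n × QV d n) :
    star ((weyl d n x.1 x.2).mulVec ψ) ⬝ᵥ ((weyl d n x.1 x.2).mulVec ψ) = star ψ ⬝ᵥ ψ := by
  rw [Matrix.star_mulVec, ← Matrix.dotProduct_mulVec, Matrix.mulVec_mulVec,
    weyl_conjTranspose hd, weyl_neg_mul hd, Matrix.one_mulVec]

theorem eig_iff (hd : Odd d) {ψ : QV d n → ℂ} (hψ : star ψ ⬝ᵥ ψ = 1) (x : QV d n × QV d n) :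
    Eig ψ x ↔ ‖xi d n (Matrix.of (fun a b => ψ a * starRingEnd ℂ (ψ b))) (-x)‖ = 1 := by
  have hs : ∀ z : ℂ, star z * z = ((‖z‖ ^ 2 : ℝ) : ℂ) := by
    intro z
    rw [← Complex.normSq_eq_norm_sq, mul_comm]
    exact Complex.mul_conj z
  rw [xi_pure]
  have hw := norm_weyl hd ψ x
  rw [hψ] at hw
  constructor
  · rintro ⟨c, hc⟩
    rw [hc] at hw ⊢
    rw [dotProduct_smul, hψ, smul_eq_mul, mul_one]
    rw [star_smul, smul_dotProduct, dotProduct_smul, hψ, smul_eq_mul, smul_eq_mul, mul_one,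
      hs] at hw
    have h2 : ‖c‖ ^ 2 = 1 := by exact_mod_cast hw
    nlinarith [norm_nonneg c]
  · intro h
    set c := star ψ ⬝ᵥ (weyl d n x.1 x.2).mulVec ψ with hc
    set φ := (weyl d n x.1 x.2).mulVec ψ with hφ
    refine ⟨c, ?_⟩
    have hc' : star φ ⬝ᵥ ψ = star c := by
      rw [hc, star_dotProduct]
    have h3 : star c * c = 1 := by rw [hs, h]; simp
    rw [← sub_eq_zero, ← dotProduct_star_self_eq_zero (v := φ - c • ψ)]
    rw [star_sub, star_smul, sub_dotProduct, dotProduct_sub, dotProduct_sub]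
    simp only [smul_dotProduct, dotProduct_smul, hψ, hc', hw, ← hc, smul_eq_mul]
    linear_combination (-1 : ℂ) * h3

theorem trace_pure (ψ : QV d n → ℂ) :
    (Matrix.of (fun a b => ψ a * starRingEnd ℂ (ψ b)) : Mat d n).trace = star ψ ⬝ᵥ ψ := by
  simp only [Matrix.trace, Matrix.diag_apply, Matrix.of_apply, dotProduct]
  refine Finset.sum_congr rfl fun a _ => ?_
  simp only [Pi.star_apply, RCLike.star_def]
  ring

theorem symp_of_eig (hd : Odd d) {ψ : QV d n → ℂ} (hψ : ψ ≠ 0) {x y : QV d n × QV d n}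
    (hx : Eig ψ x) (hy : Eig ψ y) : symp x y = 0 := by
  obtain ⟨e, he⟩ := eig_add hd hx hy
  obtain ⟨f, hf⟩ := eig_neg hd hψ ⟨e, he⟩
  obtain ⟨c, hc⟩ := hx
  obtain ⟨c', hc'⟩ := hy
  have h1 := congrArg (fun M : Mat d n => M.mulVec ψ) (weyl_mul hd x y)
  have h2 := congrArg (fun M : Mat d n => M.mulVec ψ) (weyl_mul hd y x)
  rw [← Matrix.mulVec_mulVec, hc', Matrix.mulVec_smul, hc, Matrix.smul_mulVec] at h1
  rw [← Matrix.mulVec_mulVec, hc, Matrix.mulVec_smul, hc', Matrix.smul_mulVec,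
    add_comm y.1, add_comm y.2] at h2
  simp only [Prod.fst_add, Prod.snd_add] at he
  rw [he] at h1 h2
  obtain ⟨a, ha⟩ : ∃ a, ψ a ≠ 0 := by
    by_contra hcon
    push Not at hcon
    exact hψ (funext hcon)
  have he0 : e ≠ 0 := by
    rintro rfl
    have h3 := congrArg (fun M : Mat d n => M.mulVec ψ) (weyl_neg_mul hd (x + y))
    simp only [Prod.fst_add, Prod.snd_add] at h3
    rw [← Matrix.mulVec_mulVec, he, zero_smul, Matrix.mulVec_zero, Matrix.one_mulVec] at h3
    exact hψ h3.symm
  have h1a := congrFun h1 a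
  have h2a := congrFun h2 a
  simp only [Pi.smul_apply, smul_eq_mul] at h1a h2a
  have h4 : ch d ((2 : ZMod d)⁻¹ * symp x y) * (e * ψ a) =
      ch d ((2 : ZMod d)⁻¹ * symp y x) * (e * ψ a) := by
    rw [← h1a, ← h2a]; ring
  have h5 := mul_right_cancel₀ (mul_ne_zero he0 ha) h4
  have h6 : symp y x = - symp x y := by simp only [symp]; ring
  rw [h6] at h5
  have h7 : (2 : ZMod d)⁻¹ * symp x y = symp x y + (2 : ZMod d)⁻¹ * - symp x y := by
    linear_combination (symp x y) * two_inv hd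
  rw [h7, ch_add] at h5
  exact (ch_eq_one_iff _).1 (mul_right_cancel₀ (ch_ne_zero _) (h5.trans (one_mul _).symm))

/-- The purity of a convolution in terms of characteristic functions. -/
theorem purity_conv {g00 g01 g10 g11 : ZMod d} (hdet : g00 * g11 - g01 * g10 ≠ 0)
    (ρ σ : Mat d n) :
    (d : ℝ) ^ n * purity (conv d n g00 g01 g10 g11 ρ σ) = ∑ x : QV d n × QV d n,
      ‖xi d n ρ (((g00 * g11 - g01 * g10)⁻¹ * g11) • x.1, g00 • x.2)‖ ^ 2 *
      ‖xi d n σ ((-((g00 * g11 - g01 * g10)⁻¹ * g10)) • x.1, g01 • x.2)‖ ^ 2 := by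
  rw [← parseval]
  refine Finset.sum_congr rfl fun x _ => ?_
  obtain ⟨p, q⟩ := x
  rw [xi_conv hdet, norm_mul, mul_pow]

theorem forward (hd : Odd d) {g00 g01 g10 g11 : ZMod d} (h00 : g00 ≠ 0) (h01 : g01 ≠ 0)
    (h10 : g10 ≠ 0) (h11 : g11 ≠ 0) (hdet : g00 * g11 - g01 * g10 ≠ 0)
    {ρ σ : Mat d n} (hρ : IsState d n ρ) (hσ : IsState d n σ)
    (hp : 1 ≤ purity (conv d n g00 g01 g10 g11 ρ σ)) : IsPureStabilizer d n σ := by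
  have hd0 : (0 : ℝ) < d := by exact_mod_cast (Fact.out : d.Prime).pos
  have hD : (0 : ℝ) < (d : ℝ) ^ n := by positivity
  have ha : (g00 * g11 - g01 * g10)⁻¹ * g11 ≠ 0 := mul_ne_zero (inv_ne_zero hdet) h11
  have hb : -((g00 * g11 - g01 * g10)⁻¹ * g10) ≠ 0 :=
    neg_ne_zero.2 (mul_ne_zero (inv_ne_zero hdet) h10)
  set A : QV d n × QV d n → ℝ := fun x => ‖xi d n ρ (scaleEquiv ha h00 x)‖ ^ 2 with hA
  set B : QV d n × QV d n → ℝ := fun x => ‖xi d n σ (scaleEquiv hb h01 x)‖ ^ 2 with hB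
  have h1 : (d : ℝ) ^ n ≤ ∑ x, A x * B x := by
    have := purity_conv hdet ρ σ
    change _ = ∑ x, A x * B x at this
    rw [← this]
    nlinarith
  have hAs : ∑ x, A x ≤ (d : ℝ) ^ n := by
    rw [hA, Equiv.sum_comp (scaleEquiv ha h00) (fun x => ‖xi d n ρ x‖ ^ 2), parseval]
    nlinarith [purity_le_one hρ]
  have hBs' : ∑ x, B x = (d : ℝ) ^ n * purity σ := by
    rw [hB, Equiv.sum_comp (scaleEquiv hb h01) (fun x => ‖xi d n σ x‖ ^ 2), parseval]
  have hBs : ∑ x, B x ≤ (d : ℝ) ^ n := by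
    rw [hBs']
    nlinarith [purity_le_one hσ]
  have hA0 : ∀ x, 0 ≤ A x := fun x => sq_nonneg _
  have hB0 : ∀ x, 0 ≤ B x := fun x => sq_nonneg _
  have hA1 : ∀ x, A x ≤ 1 := fun x => pow_le_one₀ (norm_nonneg _) (xi_norm_le hρ _)
  have hB1 : ∀ x, B x ≤ 1 := fun x => pow_le_one₀ (norm_nonneg _) (xi_norm_le hσ _)
  have hAB : ∀ x, A x - A x * B x = 0 := by
    have : ∑ x, (A x - A x * B x) = 0 := by
      apply le_antisymm
      · rw [Finset.sum_sub_distrib]; linarith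
      · exact Finset.sum_nonneg fun x _ => by nlinarith [hA0 x, hB1 x]
    intro x
    exact (Finset.sum_eq_zero_iff_of_nonneg fun x _ => by nlinarith [hA0 x, hB1 x]).1 this x
      (Finset.mem_univ x)
  have hBA : ∀ x, B x - A x * B x = 0 := by
    have : ∑ x, (B x - A x * B x) = 0 := by
      apply le_antisymm
      · rw [Finset.sum_sub_distrib]; linarith
      · exact Finset.sum_nonneg fun x _ => by nlinarith [hB0 x, hA1 x]
    intro x
    exact (Finset.sum_eq_zero_iff_of_nonneg fun x _ => by nlinarith [hB0 x, hA1 x]).1 this x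
      (Finset.mem_univ x)
  have hB01 : ∀ x, B x = 0 ∨ B x = 1 := by
    intro x
    have e1 : A x = B x := by linarith [hAB x, hBA x]
    have e2 := hBA x
    rw [e1] at e2
    have e3 : B x * (1 - B x) = 0 := by linarith
    rcases mul_eq_zero.1 e3 with e | e
    · exact Or.inl e
    · exact Or.inr (by linarith)
  have hBe : ∑ x, B x = (d : ℝ) ^ n := by
    apply le_antisymm hBs
    refine h1.trans (Finset.sum_le_sum fun x _ => ?_)
    nlinarith [hB0 x, hA1 x]
  have hpσ : purity σ = 1 := by
    rw [hBs'] at hBe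
    exact mul_left_cancel₀ hD.ne' (by rw [hBe, mul_one])
  obtain ⟨ψ, hψ⟩ := pure_vec hσ hpσ
  have hψ1 : star ψ ⬝ᵥ ψ = 1 := by rw [← trace_pure, ← hψ, hσ.2]
  have hψ0 : ψ ≠ 0 := by
    rintro rfl
    simp at hψ1
  have hxi : ∀ x, ‖xi d n σ x‖ ^ 2 = if Eig ψ (-x) then 1 else 0 := by
    intro x
    have h3 := eig_iff hd hψ1 (-x)
    rw [← hψ, neg_neg] at h3
    have h4 := hB01 ((scaleEquiv hb h01).symm x)
    simp only [hB, Equiv.apply_symm_apply] at h4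
    split_ifs with h5
    · rw [h3.1 h5]; norm_num
    · rcases h4 with h4 | h4
      · exact h4
      · exact absurd (h3.2 (by nlinarith [norm_nonneg (xi d n σ x)])) h5
  let S : AddSubgroup (QV d n × QV d n) :=
    { carrier := {x | Eig ψ x}
      add_mem' := fun hx hy => eig_add hd hx hy
      zero_mem' := ⟨1, by simp [weyl_zero]⟩
      neg_mem' := fun hx => eig_neg hd hψ0 hx }
  refine ⟨S, ?_, ψ, hψ0, hψ, fun pq h => h⟩
  have h5 := parseval σ
  rw [hpσ, mul_one] at h5
  simp only [hxi] at h5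
  have h7 : (∑ x, if Eig ψ (-x) then (1 : ℝ) else 0) = ∑ x, if Eig ψ x then (1 : ℝ) else 0 :=
    Equiv.sum_comp (Equiv.neg (QV d n × QV d n)) (fun x => if Eig ψ x then (1 : ℝ) else 0)
  rw [h7, Finset.sum_boole] at h5
  have h6 : Nat.card S = (Finset.univ.filter fun x => Eig ψ x).card := by
    rw [Nat.card_eq_fintype_card]
    exact Fintype.card_subtype _
  rw [h6]
  exact_mod_cast h5

end Main

section Back
variable {d n : ℕ} [Fact (Nat.Prime d)]

/-- Scaling map on phase space. -/
def sc (α β : ZMod d) (y : QV d n × QV d n) : QV d n × QV d n := (α • y.1, β • y.2)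

theorem sc_add (α β : ZMod d) (x y : QV d n × QV d n) :
    sc α β (x + y) = sc α β x + sc α β y := by
  simp [sc]

theorem sc_neg (α β : ZMod d) (x : QV d n × QV d n) : sc α β (-x) = - sc α β x := by
  simp [sc]

theorem sc_zero (α β : ZMod d) : sc α β (0 : QV d n × QV d n) = 0 := by
  simp [sc]

theorem sc_inj {α β : ZMod d} (hα : α ≠ 0) (hβ : β ≠ 0) :
    Function.Injective (sc α β : QV d n × QV d n → QV d n × QV d n) :=
  (scaleEquiv hα hβ).injective

theorem symp_sc (α β : ZMod d) (x y : QV d n × QV d n) :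
    symp (sc α β x) (sc α β y) = α * β * symp x y := by
  simp only [symp, sc, qdot_smul_left, qdot_smul_right]; ring

theorem symp_add_right (z x y : QV d n × QV d n) : symp z (x + y) = symp z x + symp z y := by
  simp only [symp, Prod.fst_add, Prod.snd_add, qdot_add_left, qdot_add_right]; ring

theorem symp_neg_right (z x : QV d n × QV d n) : symp z (-x) = - symp z x := by
  simp only [symp, Prod.fst_neg, Prod.snd_neg, qdot_neg_left, qdot_neg_right]; ring

theorem symp_zero_right (z : QV d n × QV d n) : symp z 0 = 0 := by
  simp only [symp, Prod.fst_zero, Prod.snd_zero, qdot_zero_left, qdot_zero_right, sub_zero]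

theorem sum_ch_symp (y : QV d n × QV d n) :
    ∑ z : QV d n × QV d n, ch d (symp z y) = if y = 0 then ((d : ℂ) ^ n) ^ 2 else 0 := by
  have h1 : ∀ z : QV d n × QV d n, ch d (symp z y) =
      ch d (qdot z.1 y.2) * ch d (qdot (-y.1) z.2) := by
    intro z; rw [← ch_add, symp, qdot_neg_left, sub_eq_add_neg]
  simp only [h1]
  rw [Fintype.sum_prod_type]
  simp only [← Finset.mul_sum, sum_ch', ← Finset.sum_mul, sum_ch, neg_eq_zero]
  obtain ⟨p, q⟩ := y
  by_cases hp : p = 0 <;> by_cases hq : q = 0 <;> simp [hp, hq, sq]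

/-- The phase-twisted scaled Weyl operators. -/
noncomputable def vop (α β : ZMod d) (z s : QV d n × QV d n) : Mat d n :=
  ch d (symp z (sc α β s)) • weyl d n (sc α β s).1 (sc α β s).2

/-- The stabilizer state associated with `S` scaled by `(α,β)` and the phases `z`. -/
noncomputable def stab (S : AddSubgroup (QV d n × QV d n)) (α β : ZMod d)
    (z : QV d n × QV d n) : Mat d n :=
  ((d : ℂ) ^ n)⁻¹ • ∑ s : S, vop α β z s

theorem vop_mul (hd : Odd d) (α β : ZMod d) (z : QV d n × QV d n) {s t : QV d n × QV d n}
    (h : symp s t = 0) : vop α β z s * vop α β z t = vop α β z (s + t) := by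
  simp only [vop]
  rw [Matrix.smul_mul, Matrix.mul_smul, weyl_mul hd, symp_sc, h, mul_zero, mul_zero, ch_zero,
    one_smul, smul_smul, ← ch_add, sc_add, symp_add_right]
  rfl

theorem vop_conj (hd : Odd d) (α β : ZMod d) (z s : QV d n × QV d n) :
    (vop α β z s)ᴴ = vop α β z (-s) := by
  simp only [vop]
  rw [conjTranspose_smul, weyl_conjTranspose hd, star_ch, sc_neg, symp_neg_right]
  rfl

theorem xi_stab (hd : Odd d) (S : AddSubgroup (QV d n × QV d n)) {α β : ZMod d}
    (hα : α ≠ 0) (hβ : β ≠ 0) (z : QV d n × QV d n) (s : S) :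
    xi d n (stab S α β z) (sc α β s) = ch d (symp z (sc α β s)) := by
  have hd0 : (d : ℂ) ≠ 0 := by exact_mod_cast (Fact.out : d.Prime).ne_zero
  have h1 : xi d n (stab S α β z) (sc α β s) = ((d : ℂ) ^ n)⁻¹ *
      ∑ t : S, ch d (symp z (sc α β t)) *
        xi d n (weyl d n (sc α β t).1 (sc α β t).2) (sc α β s) := by
    simp only [xi, stab, vop]
    rw [Matrix.smul_mul, trace_smul, Finset.sum_mul, trace_sum, smul_eq_mul]
    congr 1
    refine Finset.sum_congr rfl fun t _ => ?_
    rw [Matrix.smul_mul, trace_smul, smul_eq_mul]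
  rw [h1]
  simp only [xi_weyl hd]
  rw [Finset.sum_eq_single s]
  · rw [if_pos rfl]
    field_simp
  · intro t _ ht
    rw [if_neg, mul_zero]
    intro h
    exact ht (Subtype.ext (sc_inj hα hβ h).symm)
  · simp

theorem stab_isState (hd : Odd d) {S : AddSubgroup (QV d n × QV d n)} {α β : ZMod d}
    (hα : α ≠ 0) (hβ : β ≠ 0) (z : QV d n × QV d n) (hS : Nat.card S = d ^ n)
    (hiso : ∀ s ∈ S, ∀ t ∈ S, symp s t = 0) : IsState d n (stab S α β z) := by
  have hd0 : (d : ℂ) ≠ 0 := by exact_mod_cast (Fact.out : d.Prime).ne_zero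
  constructor
  · have hherm : (stab S α β z)ᴴ = stab S α β z := by
      simp only [stab]
      rw [conjTranspose_smul, conjTranspose_sum]
      congr 1
      · simp
      · simp only [vop_conj hd]
        exact Equiv.sum_comp (Equiv.neg S) (fun s : S => vop α β z (s : QV d n × QV d n))
    have hidem : stab S α β z * stab S α β z = stab S α β z := by
      simp only [stab]
      rw [Matrix.smul_mul, Matrix.mul_smul, Finset.sum_mul_sum]
      have h1 : ∀ s : S, ∑ t : S, vop α β z s * vop α β z t = ∑ t : S, vop α β z t := by
        intro s
        rw [← Equiv.sum_comp (Equiv.addLeft s) (fun t : S => vop α β z (t : QV d n × QV d n))]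
        refine Finset.sum_congr rfl fun t _ => ?_
        rw [vop_mul hd α β z (hiso s s.2 t t.2)]
        rfl
      simp only [h1]
      rw [Finset.sum_const, Finset.card_univ, ← Nat.card_eq_fintype_card, hS,
        ← Nat.cast_smul_eq_nsmul ℂ, smul_smul, smul_smul]
      congr 1
      push_cast
      field_simp
    have h2 := Matrix.posSemidef_conjTranspose_mul_self (stab S α β z)
    rwa [hherm, hidem] at h2
  · have h3 := xi_stab hd S hα hβ z 0
    rw [AddSubgroup.coe_zero, sc_zero, symp_zero_right, ch_zero, xi_zero] at h3
    exact h3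

theorem sum_stab (S : AddSubgroup (QV d n × QV d n)) {α β : ZMod d}
    (hα : α ≠ 0) (hβ : β ≠ 0) :
    ∑ z : QV d n × QV d n, stab S α β z = (d : ℂ) ^ n • (1 : Mat d n) := by
  have hd0 : (d : ℂ) ≠ 0 := by exact_mod_cast (Fact.out : d.Prime).ne_zero
  simp only [stab, vop]
  rw [← Finset.smul_sum, Finset.sum_comm]
  simp only [← Finset.sum_smul, sum_ch_symp]
  rw [Finset.sum_eq_single 0]
  · rw [AddSubgroup.coe_zero, sc_zero, if_pos rfl, Prod.fst_zero, Prod.snd_zero, weyl_zero,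
      smul_smul]
    congr 1
    field_simp
  · intro s _ hs
    rw [if_neg, zero_smul]
    intro h
    apply hs
    apply Subtype.ext
    apply sc_inj hα hβ
    rw [h, AddSubgroup.coe_zero, sc_zero]
  · simp

theorem conv_stab_purity (hd : Odd d) {g00 g01 g10 g11 : ZMod d} (h00 : g00 ≠ 0)
    (h01 : g01 ≠ 0) (h10 : g10 ≠ 0) (h11 : g11 ≠ 0) (hdet : g00 * g11 - g01 * g10 ≠ 0)
    {σ : Mat d n} (hσ : IsState d n σ) {S : AddSubgroup (QV d n × QV d n)}
    (hS : Nat.card S = d ^ n) (hxi : ∀ s ∈ S, ‖xi d n σ s‖ = 1) {α β : ZMod d}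
    (hαd : α * -((g00 * g11 - g01 * g10)⁻¹ * g10) = (g00 * g11 - g01 * g10)⁻¹ * g11)
    (hβd : β * g01 = g00) (hα : α ≠ 0) (hβ : β ≠ 0)
    (z : QV d n × QV d n) (hst : IsState d n (stab S α β z)) :
    purity (conv d n g00 g01 g10 g11 (stab S α β z) σ) = 1 := by
  have hd0 : (0 : ℝ) < d := by exact_mod_cast (Fact.out : d.Prime).pos
  have hD : (0 : ℝ) < (d : ℝ) ^ n := by positivity
  apply le_antisymm (purity_le_one (conv_isState hdet hst hσ))
  have hb : -((g00 * g11 - g01 * g10)⁻¹ * g10) ≠ 0 :=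
    neg_ne_zero.2 (mul_ne_zero (inv_ne_zero hdet) h10)
  have h1 := purity_conv hdet (stab S α β z) σ
  have h2 : ∑ y : QV d n × QV d n,
      ‖xi d n (stab S α β z) (sc α β y)‖ ^ 2 * ‖xi d n σ y‖ ^ 2 =
      (d : ℝ) ^ n * purity (conv d n g00 g01 g10 g11 (stab S α β z) σ) := by
    rw [h1, ← Equiv.sum_comp (scaleEquiv hb h01)]
    refine Finset.sum_congr rfl fun x _ => ?_
    simp only [scaleEquiv, Equiv.coe_fn_mk, sc, smul_smul, hαd, hβd]
  have h3 : (d : ℝ) ^ n ≤ ∑ y : QV d n × QV d n,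
      ‖xi d n (stab S α β z) (sc α β y)‖ ^ 2 * ‖xi d n σ y‖ ^ 2 := by
    calc (d : ℝ) ^ n = ∑ y ∈ Finset.univ.filter (fun y => y ∈ S), (1 : ℝ) := by
          rw [Finset.sum_const, nsmul_eq_mul, mul_one]
          have h6 : Nat.card S = (Finset.univ.filter fun x => x ∈ S).card := by
            rw [Nat.card_eq_fintype_card]
            exact Fintype.card_subtype _
          rw [← h6, hS]
          push_cast
          rfl
      _ = ∑ y ∈ Finset.univ.filter (fun y => y ∈ S),
          ‖xi d n (stab S α β z) (sc α β y)‖ ^ 2 * ‖xi d n σ y‖ ^ 2 := by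
          refine Finset.sum_congr rfl fun y hy => ?_
          have hy' : y ∈ S := (Finset.mem_filter.1 hy).2
          rw [hxi y hy', xi_stab hd S hα hβ z ⟨y, hy'⟩, norm_ch]
          norm_num
      _ ≤ _ := Finset.sum_le_univ_sum_of_nonneg fun y => by positivity
  rw [h2] at h3
  by_contra hc
  push Not at hc
  nlinarith

theorem conv_mixed_purity {g00 g01 g10 g11 : ZMod d} (h00 : g00 ≠ 0) (h11 : g11 ≠ 0)
    (hdet : g00 * g11 - g01 * g10 ≠ 0) (hd : Odd d)
    {σ : Mat d n} (hσ : IsState d n σ) :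
    purity (conv d n g00 g01 g10 g11 (((d : ℂ) ^ n)⁻¹ • (1 : Mat d n)) σ) =
      ((d : ℝ) ^ n)⁻¹ := by
  have hd0 : (0 : ℝ) < d := by exact_mod_cast (Fact.out : d.Prime).pos
  have hdc : (d : ℂ) ≠ 0 := by exact_mod_cast (Fact.out : d.Prime).ne_zero
  have hD : (0 : ℝ) < (d : ℝ) ^ n := by positivity
  have ha : (g00 * g11 - g01 * g10)⁻¹ * g11 ≠ 0 := mul_ne_zero (inv_ne_zero hdet) h11
  have h1 : ∀ x, xi d n (((d : ℂ) ^ n)⁻¹ • (1 : Mat d n)) x = if x = 0 then 1 else 0 := by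
    intro x
    have h2 := xi_weyl hd x 0
    rw [Prod.fst_zero, Prod.snd_zero, weyl_zero] at h2
    have h3 : xi d n (((d : ℂ) ^ n)⁻¹ • (1 : Mat d n)) x =
        ((d : ℂ) ^ n)⁻¹ * xi d n (1 : Mat d n) x := by
      simp only [xi]
      rw [Matrix.smul_mul, trace_smul, smul_eq_mul]
    rw [h3, h2]
    split_ifs
    · field_simp
    · simp
  have h2 := purity_conv hdet (((d : ℂ) ^ n)⁻¹ • (1 : Mat d n)) σ
  rw [Finset.sum_eq_single 0] at h2
  · simp only [Prod.fst_zero, Prod.snd_zero, smul_zero] at h2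
    change _ = ‖xi d n _ 0‖ ^ 2 * ‖xi d n σ 0‖ ^ 2 at h2
    rw [h1, if_pos rfl, xi_zero, hσ.2] at h2
    refine eq_inv_of_mul_eq_one_right ?_
    simpa using h2
  · intro x _ hx
    rw [h1, if_neg]
    · simp
    · intro h
      apply hx
      exact (scaleEquiv ha h00).injective (h.trans (sc_zero _ _).symm)
  · simp

theorem conv_sum {ι : Type*} [Fintype ι] {g00 g01 g10 g11 : ZMod d}
    (hdet : g00 * g11 - g01 * g10 ≠ 0) (c : ι → ℂ) (ρ : ι → Mat d n) (σ : Mat d n) :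
    ∑ i, c i • conv d n g00 g01 g10 g11 (ρ i) σ =
      conv d n g00 g01 g10 g11 (∑ i, c i • ρ i) σ := by
  ext k k'
  rw [conv_apply hdet, Matrix.sum_apply]
  simp only [Matrix.smul_apply, conv_apply hdet, Matrix.sum_apply, smul_eq_mul, Finset.mul_sum,
    Finset.sum_mul]
  rw [Finset.sum_comm]
  simp only [mul_assoc]

theorem mix_isState {m : ℕ} {p : Fin m → ℝ} {τ : Fin m → Mat d n} (hp : ∀ i, 0 ≤ p i)
    (hs : ∑ i, p i = 1) (hτ : ∀ i, IsState d n (τ i)) :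
    IsState d n (∑ i, (p i : ℂ) • τ i) := by
  constructor
  · refine Matrix.posSemidef_sum _ fun i _ => (hτ i).1.smul ?_
    exact_mod_cast hp i
  · rw [trace_sum]
    simp only [trace_smul, (hτ _).2, smul_eq_mul, mul_one]
    exact_mod_cast hs

theorem log_nonneg' : 0 ≤ (n : ℝ) * Real.log d := by
  have : (1 : ℝ) ≤ d := by exact_mod_cast (Fact.out : d.Prime).one_lt.le
  have := Real.log_nonneg this
  positivity

/-- Every ensemble value is bounded by `n log d - (1 - M)` if all output purities are `≤ M`. -/
theorem holevo_term_le {E : Mat d n → Mat d n} (hE : ∀ ρ, IsState d n ρ → IsState d n (E ρ))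
    {M : ℝ} (hM : ∀ ρ, IsState d n ρ → purity (E ρ) ≤ M)
    {m : ℕ} {p : Fin m → ℝ} {ρs : Fin m → Mat d n}
    (h : (∀ i, 0 ≤ p i) ∧ ∑ i, p i = 1 ∧ ∀ i, IsState d n (ρs i)) :
    vnEnt (∑ i, (p i : ℂ) • E (ρs i)) - ∑ i, p i * vnEnt (E (ρs i)) ≤
      n * Real.log d - (1 - M) := by
  have h1 := vnEnt_le (mix_isState h.1 h.2.1 fun i => hE _ (h.2.2 i))
  have h2 : 1 - M ≤ ∑ i, p i * vnEnt (E (ρs i)) := by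
    calc 1 - M = ∑ i, p i * (1 - M) := by rw [← Finset.sum_mul, h.2.1, one_mul]
      _ ≤ _ := Finset.sum_le_sum fun i _ => mul_le_mul_of_nonneg_left (by
        have := vnEnt_ge (hE _ (h.2.2 i))
        have := hM _ (h.2.2 i)
        linarith) (h.1 i)
  linarith

theorem holevo_le {E : Mat d n → Mat d n} {a : ℝ} (ha : 0 ≤ a)
    (h : ∀ (m : ℕ) (p : Fin m → ℝ) (ρs : Fin m → Mat d n),
      ((∀ i, 0 ≤ p i) ∧ ∑ i, p i = 1 ∧ ∀ i, IsState d n (ρs i)) →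
      vnEnt (∑ i, (p i : ℂ) • E (ρs i)) - ∑ i, p i * vnEnt (E (ρs i)) ≤ a) :
    holevoCap d n E ≤ a :=
  Real.iSup_le (fun m => Real.iSup_le (fun p => Real.iSup_le (fun ρs =>
    Real.iSup_le (fun hh => h m p ρs hh) ha) ha) ha) ha

theorem le_holevo {E : Mat d n → Mat d n} {a : ℝ} (ha : 0 ≤ a)
    (h : ∀ (m : ℕ) (p : Fin m → ℝ) (ρs : Fin m → Mat d n),
      ((∀ i, 0 ≤ p i) ∧ ∑ i, p i = 1 ∧ ∀ i, IsState d n (ρs i)) →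
      vnEnt (∑ i, (p i : ℂ) • E (ρs i)) - ∑ i, p i * vnEnt (E (ρs i)) ≤ a)
    {m : ℕ} {p : Fin m → ℝ} {ρs : Fin m → Mat d n}
    (hh : (∀ i, 0 ≤ p i) ∧ ∑ i, p i = 1 ∧ ∀ i, IsState d n (ρs i)) :
    vnEnt (∑ i, (p i : ℂ) • E (ρs i)) - ∑ i, p i * vnEnt (E (ρs i)) ≤ holevoCap d n E := by
  have b4 : ∀ (m : ℕ) (p : Fin m → ℝ) (ρs : Fin m → Mat d n),
      (⨆ _ : (∀ i, 0 ≤ p i) ∧ ∑ i, p i = 1 ∧ ∀ i, IsState d n (ρs i),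
      (vnEnt (∑ i, (p i : ℂ) • E (ρs i)) - ∑ i, p i * vnEnt (E (ρs i)))) ≤ a :=
    fun m p ρs => Real.iSup_le (fun hh => h m p ρs hh) ha
  have b3 := fun (m : ℕ) (p : Fin m → ℝ) => Real.iSup_le (fun ρs => b4 m p ρs) ha
  have b2 := fun (m : ℕ) => Real.iSup_le (fun p => b3 m p) ha
  refine le_ciSup_of_le ⟨a, ?_⟩ m ?_
  · rintro _ ⟨m, rfl⟩; exact b2 m
  refine le_ciSup_of_le ⟨a, ?_⟩ p ?_
  · rintro _ ⟨p, rfl⟩; exact b3 m p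
  refine le_ciSup_of_le ⟨a, ?_⟩ ρs ?_
  · rintro _ ⟨ρs, rfl⟩; exact b4 m p ρs
  refine le_ciSup_of_le ⟨a, ?_⟩ hh le_rfl
  rintro _ ⟨hh, rfl⟩; exact h m p ρs hh

theorem backward (hd : Odd d) {g00 g01 g10 g11 : ZMod d} (h00 : g00 ≠ 0)
    (h01 : g01 ≠ 0) (h10 : g10 ≠ 0) (h11 : g11 ≠ 0) (hdet : g00 * g11 - g01 * g10 ≠ 0)
    {σ : Mat d n} (hσ : IsState d n σ) (hst : IsPureStabilizer d n σ) :
    holevoCap d n (fun ρ => conv d n g00 g01 g10 g11 ρ σ) = (n : ℝ) * Real.log d := by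
  have hd0 : (0 : ℝ) < d := by exact_mod_cast (Fact.out : d.Prime).pos
  have hdc : (d : ℂ) ≠ 0 := by exact_mod_cast (Fact.out : d.Prime).ne_zero
  have hE : ∀ ρ, IsState d n ρ → IsState d n (conv d n g00 g01 g10 g11 ρ σ) :=
    fun ρ hρ => conv_isState hdet hρ hσ
  have hub : ∀ (m : ℕ) (p : Fin m → ℝ) (ρs : Fin m → Mat d n),
      ((∀ i, 0 ≤ p i) ∧ ∑ i, p i = 1 ∧ ∀ i, IsState d n (ρs i)) →
      vnEnt (∑ i, (p i : ℂ) • conv d n g00 g01 g10 g11 (ρs i) σ) -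
        ∑ i, p i * vnEnt (conv d n g00 g01 g10 g11 (ρs i) σ) ≤ n * Real.log d := by
    intro m p ρs h
    have := holevo_term_le hE (fun ρ hρ => purity_le_one (hE ρ hρ)) h
    linarith
  have hle : holevoCap d n (fun ρ => conv d n g00 g01 g10 g11 ρ σ) ≤ (n : ℝ) * Real.log d :=
    holevo_le (E := fun ρ => conv d n g00 g01 g10 g11 ρ σ) (log_nonneg' (d := d) (n := n)) hub
  refine le_antisymm hle ?_
  obtain ⟨S, hS, ψ, hψ0, hψ, hSe⟩ := hst
  have hψ1 : star ψ ⬝ᵥ ψ = 1 := by rw [← trace_pure, ← hψ, hσ.2]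
  have hxi : ∀ s ∈ S, ‖xi d n σ s‖ = 1 := by
    intro s hs
    have h1 := (eig_iff hd hψ1 (-s)).1 (hSe (-s) (S.neg_mem hs))
    rwa [neg_neg, ← hψ] at h1
  have hiso : ∀ s ∈ S, ∀ t ∈ S, symp s t = 0 := fun s hs t ht =>
    symp_of_eig hd hψ0 (hSe s hs) (hSe t ht)
  have hb : -((g00 * g11 - g01 * g10)⁻¹ * g10) ≠ 0 :=
    neg_ne_zero.2 (mul_ne_zero (inv_ne_zero hdet) h10)
  have ha : (g00 * g11 - g01 * g10)⁻¹ * g11 ≠ 0 := mul_ne_zero (inv_ne_zero hdet) h11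
  obtain ⟨α, hαd⟩ : ∃ α, α * -((g00 * g11 - g01 * g10)⁻¹ * g10) =
      (g00 * g11 - g01 * g10)⁻¹ * g11 := ⟨_, div_mul_cancel₀ _ hb⟩
  obtain ⟨β, hβd⟩ : ∃ β, β * g01 = g00 := ⟨_, div_mul_cancel₀ _ h01⟩
  have hα : α ≠ 0 := by rintro rfl; rw [zero_mul] at hαd; exact ha hαd.symm
  have hβ : β ≠ 0 := by rintro rfl; rw [zero_mul] at hβd; exact h00 hβd.symm
  have hss : ∀ z, IsState d n (stab S α β z) := fun z => stab_isState hd hα hβ z hS hiso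
  obtain ⟨m, e, hcard⟩ : ∃ m : ℕ, ∃ _ : Fin m ≃ (QV d n × QV d n), m = d ^ n * d ^ n :=
    ⟨_, (Fintype.equivFin (QV d n × QV d n)).symm, by rw [Fintype.card_prod, card_QV]⟩
  have hens : (∀ i : Fin m, 0 ≤ (((d : ℝ) ^ n * (d : ℝ) ^ n)⁻¹)) ∧
      ∑ i : Fin m, (((d : ℝ) ^ n * (d : ℝ) ^ n)⁻¹) = 1 ∧
      ∀ i : Fin m, IsState d n (stab S α β (e i)) := by
    refine ⟨fun _ => by positivity, ?_, fun i => hss _⟩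
    rw [Finset.sum_const, Finset.card_univ, Fintype.card_fin, nsmul_eq_mul, hcard]
    push_cast
    field_simp
  have key := le_holevo (E := fun ρ => conv d n g00 g01 g10 g11 ρ σ)
    (log_nonneg' (d := d) (n := n)) hub
    (p := fun _ => ((d : ℝ) ^ n * (d : ℝ) ^ n)⁻¹) (ρs := fun i => stab S α β (e i)) hens
  beta_reduce at key
  have h1 : ∀ i, vnEnt (conv d n g00 g01 g10 g11 (stab S α β (e i)) σ) = 0 := fun i =>
    vnEnt_pure (hE _ (hss _))
      (conv_stab_purity hd h00 h01 h10 h11 hdet hσ hS hxi hαd hβd hα hβ _ (hss _))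
  have h2 : ∑ i : Fin m,
      (((((d : ℝ) ^ n * (d : ℝ) ^ n)⁻¹ : ℝ)) : ℂ) • stab S α β (e i) =
      ((d : ℂ) ^ n)⁻¹ • (1 : Mat d n) := by
    rw [← Finset.smul_sum, Equiv.sum_comp e (fun z => stab S α β z), sum_stab S hα hβ, smul_smul]
    congr 1
    push_cast
    field_simp
  have h3 : IsState d n (((d : ℂ) ^ n)⁻¹ • (1 : Mat d n)) := by
    rw [← h2]
    exact mix_isState (p := fun _ => ((d : ℝ) ^ n * (d : ℝ) ^ n)⁻¹) hens.1 hens.2.1 hens.2.2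
  simp only [h1, mul_zero, Finset.sum_const_zero, sub_zero] at key
  rw [conv_sum hdet, h2, vnEnt_mixed (hE _ h3) (conv_mixed_purity h00 h11 hdet hd hσ)] at key
  exact key

end Back

/-- Maximizer of the Holevo capacity: `χ(E_σ) = n log d` iff `σ` is
a pure stabilizer state, where `E_σ : ρ ↦ ρ ⊠ σ`. -/
theorem statement17 (d n : ℕ) [Fact (Nat.Prime d)] (hd : Odd d) (hn : 1 ≤ n)
    (g00 g01 g10 g11 : ZMod d) (h00 : g00 ≠ 0) (h01 : g01 ≠ 0)
    (h10 : g10 ≠ 0) (h11 : g11 ≠ 0) (hdet : g00 * g11 - g01 * g10 ≠ 0)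
    (σ : Mat d n) (hσ : IsState d n σ) :
    holevoCap d n (fun ρ => conv d n g00 g01 g10 g11 ρ σ) = (n : ℝ) * Real.log d ↔
      IsPureStabilizer d n σ := by
  refine ⟨fun hcap => ?_, backward hd h00 h01 h10 h11 hdet hσ⟩
  have hE : ∀ ρ, IsState d n ρ → IsState d n (conv d n g00 g01 g10 g11 ρ σ) :=
    fun ρ hρ => conv_isState hdet hρ hσ
  obtain ⟨ρ, hρ, hmax⟩ := states_compact.exists_isMaxOn ⟨σ, hσ⟩
    (purity_conv_continuous (n := n) hdet σ).continuousOn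
  by_cases hp : 1 ≤ purity (conv d n g00 g01 g10 g11 ρ σ)
  · exact forward hd h00 h01 h10 h11 hdet hρ hσ hp
  · exfalso
    push Not at hp
    have hlog : 0 < (n : ℝ) * Real.log d := by
      have h1 : (1 : ℝ) < d := by exact_mod_cast (Fact.out : d.Prime).one_lt
      have h2 := Real.log_pos h1
      have h3 : (0 : ℝ) < n := by exact_mod_cast hn
      positivity
    have h1 : holevoCap d n (fun ρ => conv d n g00 g01 g10 g11 ρ σ) ≤
        (n : ℝ) * Real.log d -
          min (1 - purity (conv d n g00 g01 g10 g11 ρ σ)) ((n : ℝ) * Real.log d) := by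
      refine holevo_le (sub_nonneg.2 (min_le_right _ _)) fun m p ρs h => ?_
      have h2 := holevo_term_le hE (M := purity (conv d n g00 g01 g10 g11 ρ σ))
        (fun τ hτ => hmax hτ) h
      have h3 := min_le_left (1 - purity (conv d n g00 g01 g10 g11 ρ σ)) ((n : ℝ) * Real.log d)
      linarith
    rw [hcap] at h1
    have h4 : 0 < min (1 - purity (conv d n g00 g01 g10 g11 ρ σ)) ((n : ℝ) * Real.log d) :=
      lt_min (by linarith) hlog
    linarith

end PaperQI
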